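/- arXiv:2107.03171 — 2 statements merged into one kernel-verified Lean document; each statement's English description precedes it below -/
import Mathlib

section
/- Fix c > 0. Suppose that for every ε > 0 there exists N such that for all n ≥ N, pdeg(OR_n) ≥ (log₂ n)^{c−ε}. Then for every ε > 0 there exists N′ such that for all n ≥ N′ and every truly n-variate Boolean function f : {0,1}^n → {0,1}, we have pdeg(f) ≥ (log₂ n)^{c/(c+1)−ε}. -/
open scoped Classical

noncomputable def evalBool {ι : Type} (a : ι → Bool) (P : MvPolynomial ι ℝ) : ℝ :=
  MvPolynomial.eval (fun i => if a i then (1:ℝ) else 0) P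

def HasProbPoly {ι : Type} (f : (ι → Bool) → Bool) (ε : ℝ) (d : ℕ) : Prop :=
  ∃ (k : ℕ) (w : Fin k → ℝ) (P : Fin k → MvPolynomial ι ℝ),
    (∀ i, 0 ≤ w i) ∧ (∑ i, w i = 1) ∧ (∀ i, (P i).totalDegree ≤ d) ∧
    ∀ a : ι → Bool,
      ∑ i ∈ Finset.univ.filter
          (fun i => evalBool a (P i) ≠ (if f a then (1:ℝ) else 0)), w i ≤ ε

noncomputable def pdeg {ι : Type} (ε : ℝ) (f : (ι → Bool) → Bool) : ℕ :=
  sInf {d | HasProbPoly f ε d}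

def TrulyVariate {ι : Type} (f : (ι → Bool) → Bool) : Prop :=
  ∀ i : ι, ∃ a, f (Function.update a i (!(a i))) ≠ f a

def ORf (n : ℕ) : (Fin n → Bool) → Bool := fun a => decide (∃ i, a i = true)

noncomputable def sensitivity {n : ℕ} (f : (Fin n → Bool) → Bool) : ℕ :=
  Finset.univ.sup (fun a : Fin n → Bool =>
    (Finset.univ.filter (fun i : Fin n => f (Function.update a i (!(a i))) ≠ f a)).card)

/-!
Let `b` be the block sensitivity of `f` and `d` its probabilistic degree.

Flipping `b` disjoint sensitive blocks restricts `f` to a function `h` of `b` bits with (up to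
negation) `h 0 = 0` and `h eᵢ = 1`. Random coordinate sets of `log b` different densities isolate a
single `1` of a nonzero input, as in the Valiant–Vazirani reduction, so `OR` of `b` bits is a random
`OR` of about `log b` restrictions of `h`. Hence its probabilistic degree is at most `d` times a
power of `log log b`, and the hypothesis gives `log b ≤ d ^ (1 / c + o(1))`.

Since `f` depends on its `i`-th variable, fixing at most `2 b ^ 2` other variables turns `f` into
that variable or its negation. Hash the variables into `m = poly(b)` buckets: for a constant
proportion of them, the variable and the ones fixed for it fall into distinct buckets. Among these,
a set `S` of at least `n / (2 m)` variables lands in a common bucket. One point of `{0,1}ᵐ` per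
element of `S` encodes the values of its fixed variables, and affine substitutions into `f` realize
every labelling of these points. So polynomials of degree `O(d)` in `m` variables approximate all
`2 ^ #S` labellings, which forces `#S ≤ (m + 1) ^ O(d)`, that is `log n = O(d log b)`.

Together, `log n ≤ d ^ (1 + 1 / c + o(1))`.
-/

namespace ProbDegree

open MeasureTheory MvPolynomial

lemma two_pow_clog_le {n : ℕ} (hn : n ≠ 0) : 2 ^ Nat.clog 2 n ≤ 2 * n := by
  obtain rfl | h : n = 1 ∨ 1 < n := by lia
  · simp
  · have hpred : 2 ^ (Nat.clog 2 n - 1) < n := Nat.pow_pred_clog_lt_self one_lt_two h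
    rw [← Nat.pow_pred_mul (Nat.clog_pos one_lt_two h)]
    lia

section Probability

lemma measureReal_pi_forall_mem {κ Ω : Type*} [Fintype κ] [MeasurableSpace Ω] (ν : Measure Ω)
    [IsProbabilityMeasure ν] (T : Finset κ) (A : κ → Set Ω) :
    (Measure.pi fun _ : κ => ν).real {ρ | ∀ i ∈ T, ρ i ∈ A i} = ∏ i ∈ T, ν.real (A i) := by
  simpa [measureReal_def, Set.pi, ENNReal.toReal_prod] using
    congrArg ENNReal.toReal (Measure.pi_pi_finset (fun _ : κ => ν) A T)

lemma measureReal_mul_le_prod {Ω₁ Ω₂ : Type*} [MeasurableSpace Ω₁] [MeasurableSpace Ω₂]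
    (μ : Measure Ω₁) (ν : Measure Ω₂) [IsFiniteMeasure μ] [IsFiniteMeasure ν] {A : Set Ω₁}
    {E : Set (Ω₁ × Ω₂)} (hA : MeasurableSet A) (hE : MeasurableSet E) {c : ℝ}
    (hc : ∀ x ∈ A, c ≤ ν.real (Prod.mk x ⁻¹' E)) :
    μ.real A * c ≤ (μ.prod ν).real E := by
  have key : ENNReal.ofReal c * μ A ≤ (μ.prod ν) E :=
    calc ENNReal.ofReal c * μ A = ∫⁻ _ in A, ENNReal.ofReal c ∂μ := (setLIntegral_const A _).symm
      _ ≤ ∫⁻ x in A, ν (Prod.mk x ⁻¹' E) ∂μ :=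
        setLIntegral_mono' hA fun x hx => ENNReal.ofReal_le_of_le_toReal (hc x hx)
      _ ≤ ∫⁻ x, ν (Prod.mk x ⁻¹' E) ∂μ := setLIntegral_le_lintegral A _
      _ = (μ.prod ν) E := (Measure.prod_apply hE).symm
  calc μ.real A * c ≤ μ.real A * (ENNReal.ofReal c).toReal := by
        gcongr
        exact ENNReal.toReal_ofReal' ▸ le_max_left c 0
    _ = (ENNReal.ofReal c * μ A).toReal := by rw [ENNReal.toReal_mul, mul_comm, measureReal_def]
    _ ≤ (μ.prod ν).real E := ENNReal.toReal_mono (measure_ne_top _ _) key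

lemma exists_card_filter_le {ι Ω : Type*} [Fintype ι] [MeasurableSpace Ω]
    [DiscreteMeasurableSpace Ω] (μ : Measure Ω) [IsProbabilityMeasure μ] (p : ι → Ω → Prop) {ε : ℝ}
    (hp : ∀ i, μ.real {ω | p i ω} ≤ ε) :
    ∃ ω, (Finset.card {i | p i ω} : ℝ) ≤ ε * Fintype.card ι := by
  have hint (i : ι) : Integrable (Set.indicator {ω | p i ω} (1 : Ω → ℝ)) μ :=
    (integrable_const (1 : ℝ)).indicator .of_discrete
  obtain ⟨ω, hω⟩ := exists_le_integral (μ := μ)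
    (f := fun ω => ∑ i, Set.indicator {ω | p i ω} (1 : Ω → ℝ) ω)
    (integrable_finsetSum _ fun i _ => hint i)
  refine ⟨ω, ?_⟩
  calc (Finset.card {i | p i ω} : ℝ) = ∑ i, Set.indicator {ω | p i ω} (1 : Ω → ℝ) ω := by
        simp [Set.indicator_apply]
    _ ≤ ∑ i, μ.real {ω | p i ω} := by
        simpa only [integral_finsetSum _ fun i _ => hint i,
          integral_indicator_one MeasurableSet.of_discrete] using hω
    _ ≤ ε * Fintype.card ι := by
        simpa [mul_comm] using Finset.sum_le_sum fun i (_ : i ∈ Finset.univ) => hp i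

lemma measureReal_setOf_not {Ω : Type*} [MeasurableSpace Ω] [DiscreteMeasurableSpace Ω]
    (μ : Measure Ω) [IsProbabilityMeasure μ] (p : Ω → Prop) :
    μ.real {ω | ¬p ω} = 1 - μ.real {ω | p ω} :=
  probReal_compl_eq_one_sub MeasurableSet.of_discrete

lemma measureReal_two_of_three_le {Ω : Type*} [MeasurableSpace Ω] (μ : Measure Ω)
    [IsProbabilityMeasure μ] {B : Set Ω} (hB : MeasurableSet B) {ε : ℝ} (hε : μ.real B ≤ ε)
    (hε1 : ε ≤ 1) :
    (μ.prod (μ.prod μ)).real (B ×ˢ B ×ˢ .univ ∪ B ×ˢ Bᶜ ×ˢ B ∪ Bᶜ ×ˢ B ×ˢ B) ≤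
      3 * ε ^ 2 - 2 * ε ^ 3 := by
  refine (measureReal_union_le _ _).trans <| (add_le_add_left (measureReal_union_le _ _) _).trans ?_
  simp only [measureReal_prod_prod, probReal_univ, probReal_compl_eq_one_sub hB]
  have h0 : 0 ≤ μ.real B := measureReal_nonneg
  generalize μ.real B = p at *
  have hslope : 0 ≤ 3 * (ε + p) - 2 * (ε ^ 2 + ε * p + p ^ 2) := by
    nlinarith [mul_nonneg h0 (sub_nonneg.2 hε1), mul_nonneg h0 (sub_nonneg.2 (hε.trans hε1)),
      mul_nonneg (h0.trans hε) (sub_nonneg.2 hε1)]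
  linarith [mul_nonneg (sub_nonneg.2 hε) hslope]

end Probability

section Polynomials

/-- The embedding `{0,1} ⊆ ℝ` through which a polynomial computes a Boolean function. -/
noncomputable def bit (b : Bool) : ℝ := if b then 1 else 0

@[simp] lemma bit_true : bit true = 1 := rfl

@[simp] lemma bit_false : bit false = 0 := rfl

lemma bit_not (b : Bool) : bit (!b) = 1 - bit b := by cases b <;> simp

lemma totalDegree_one_sub_le {σ : Type*} (P : MvPolynomial σ ℝ) :
    (1 - P).totalDegree ≤ P.totalDegree := by
  simpa using totalDegree_sub 1 P

lemma totalDegree_bind₁_le {σ τ : Type*} {Q : σ → MvPolynomial τ ℝ} {D : ℕ}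
    (hQ : ∀ i, (Q i).totalDegree ≤ D) (P : MvPolynomial σ ℝ) :
    (bind₁ Q P).totalDegree ≤ P.totalDegree * D := by
  conv_lhs => rw [P.as_sum, map_sum]
  refine totalDegree_finsetSum_le fun m hm => ?_
  rw [bind₁_monomial]
  calc (C (coeff m P) * ∏ i ∈ m.support, Q i ^ m i).totalDegree
      ≤ (C (coeff m P)).totalDegree + (∏ i ∈ m.support, Q i ^ m i).totalDegree :=
        totalDegree_mul _ _
    _ ≤ ∑ i ∈ m.support, (Q i ^ m i).totalDegree := by
        simpa using totalDegree_finsetProd _ _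
    _ ≤ ∑ i ∈ m.support, m i * D :=
        Finset.sum_le_sum fun i _ => (totalDegree_pow _ _).trans (by gcongr; exact hQ i)
    _ = (m.sum fun _ e => e) * D := (Finset.sum_mul _ _ _).symm
    _ ≤ P.totalDegree * D := by gcongr; exact le_totalDegree hm

lemma evalBool_bind₁ {ι κ : Type} {Q : ι → MvPolynomial κ ℝ} {g : ι → (κ → Bool) → Bool}
    {z : κ → Bool} (hQ : ∀ i, evalBool z (Q i) = bit (g i z)) (P : MvPolynomial ι ℝ) :
    evalBool z (bind₁ Q P) = evalBool (fun i => g i z) P :=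
  (eval₂Hom_bind₁ _ _ _ _).trans (congrArg (fun x => eval x P) (funext hQ))

lemma exists_evalBool_eq {ι : Type} [Finite ι] (f : (ι → Bool) → Bool) :
    ∃ P : MvPolynomial ι ℝ, ∀ a, evalBool a P = bit (f a) := by
  have := Fintype.ofFinite ι
  refine ⟨∑ x, C (bit (f x)) * ∏ i, if x i then X i else 1 - X i, fun a => ?_⟩
  have hfactor (x : ι → Bool) (i : ι) :
      evalBool a (if x i then X i else 1 - X i) = if a i = x i then 1 else 0 := by
    cases hx : x i <;> cases ha : a i <;> simp [evalBool, ha]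
  have hprod (x : ι → Bool) :
      evalBool a (∏ i, if x i then X i else 1 - X i) = if a = x then 1 else 0 := by
    simp only [evalBool, map_prod] at hfactor ⊢
    simp only [hfactor, Finset.prod_ite_zero, Finset.prod_const_one, Finset.mem_univ, true_imp_iff,
      funext_iff]
  simp only [evalBool, map_sum, map_mul, eval_C] at hprod ⊢
  simp [hprod]

end Polynomials

/-- A probabilistic polynomial of degree at most `d` for `f`, over an arbitrary finite probability
space. The error bound `ε a` may depend on the point `a`: the reductions to and from `OR` have
one-sided errors. -/
def HasRandomPoly {ι : Type} (f : (ι → Bool) → Bool) (ε : (ι → Bool) → ℝ) (d : ℕ) : Prop :=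
  ∃ (Ω : Type) (_ : Finite Ω) (_ : MeasurableSpace Ω) (_ : MeasurableSingletonClass Ω)
    (μ : Measure Ω) (_ : IsProbabilityMeasure μ) (P : Ω → MvPolynomial ι ℝ),
    (∀ ω, (P ω).totalDegree ≤ d) ∧ ∀ a, μ.real {ω | evalBool a (P ω) ≠ bit (f a)} ≤ ε a

namespace HasRandomPoly

variable {ι κ : Type} {f : (ι → Bool) → Bool} {ε ε' : (ι → Bool) → ℝ} {d e : ℕ}

lemma mono (h : HasRandomPoly f ε d) (hε : ∀ a, ε a ≤ ε' a) (hde : d ≤ e) :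
    HasRandomPoly f ε' e := by
  obtain ⟨Ω, hΩ, hm, hs, μ, hμ, P, hdeg, herr⟩ := h
  exact ⟨Ω, hΩ, hm, hs, μ, hμ, P, fun ω => (hdeg ω).trans hde, fun a => (herr a).trans (hε a)⟩

lemma of_hasProbPoly {ε : ℝ} (h : HasProbPoly f ε d) : HasRandomPoly f (fun _ => ε) d := by
  obtain ⟨k, w, P, hw, hsum, hdeg, herr⟩ := h
  let p : PMF (Fin k) := PMF.ofFintype (fun i => ENNReal.ofReal (w i)) <| by
    rw [← ENNReal.ofReal_sum_of_nonneg fun i _ => hw i, hsum, ENNReal.ofReal_one]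
  refine ⟨Fin k, inferInstance, inferInstance, inferInstance, p.toMeasure, inferInstance, P, hdeg,
    fun a => (le_of_eq ?_).trans (herr a)⟩
  rw [measureReal_def, PMF.toMeasure_apply_fintype, ENNReal.toReal_sum, Finset.sum_filter]
  · refine Finset.sum_congr rfl fun i _ => ?_
    by_cases h : evalBool a (P i) = if f a then 1 else 0 <;>
      simp [bit, h, p, hw i]
  · intro i _
    exact ne_top_of_le_ne_top (p.apply_ne_top i) (Set.indicator_apply_le fun _ => le_rfl)

lemma hasProbPoly {δ : ℝ} (h : HasRandomPoly f ε d) (hε : ∀ a, ε a ≤ δ) : HasProbPoly f δ d := by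
  obtain ⟨Ω, hΩ, hm, hs, μ, hμ, P, hdeg, herr⟩ := h
  let e := (Finite.equivFin Ω).symm
  refine ⟨Nat.card Ω, fun i => μ.real {e i}, fun i => P (e i), fun i => measureReal_nonneg, ?_,
    fun i => hdeg (e i), fun a => (le_of_eq ?_).trans ((herr a).trans (hε a))⟩
  · have := Fintype.ofFinite Ω
    rw [Equiv.sum_comp e fun ω => μ.real {ω}, sum_measureReal_singleton, Finset.coe_univ,
      probReal_univ]
  · refine (Finset.sum_map _ e.toEmbedding fun ω => μ.real {ω}).symm.trans ?_
    rw [sum_measureReal_singleton]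
    congr 1
    ext ω
    simp [bit]

lemma of_evalBool_eq {P : MvPolynomial ι ℝ} (hP : ∀ a, evalBool a P = bit (f a)) :
    HasRandomPoly f (fun _ => 0) P.totalDegree :=
  ⟨Unit, inferInstance, inferInstance, inferInstance, .dirac (), inferInstance, fun _ => P,
    fun _ => le_rfl, fun a => by simp [hP a]⟩

lemma const (b : Bool) (d : ℕ) : HasRandomPoly (fun _ : ι → Bool => b) (fun _ => 0) d :=
  (of_evalBool_eq (P := C (bit b)) fun _ => by simp [evalBool]).mono (fun _ => le_rfl) (by simp)

lemma coord (i : ι) : HasRandomPoly (fun a : ι → Bool => a i) (fun _ => 0) 1 :=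
  (of_evalBool_eq (P := X i) fun _ => by simp [evalBool, bit]).mono (fun _ => le_rfl) (by simp)

lemma neg (h : HasRandomPoly f ε d) : HasRandomPoly (fun a => !f a) ε d := by
  obtain ⟨Ω, hΩ, hm, hs, μ, hμ, P, hdeg, herr⟩ := h
  refine ⟨Ω, hΩ, hm, hs, μ, hμ, fun ω => 1 - P ω,
    fun ω => (totalDegree_one_sub_le _).trans (hdeg ω), fun a => ?_⟩
  simpa [evalBool, bit_not] using herr a

end HasRandomPoly

lemma hasRandomPoly_pdeg {ι : Type} [Finite ι] (f : (ι → Bool) → Bool) {ε : ℝ} (hε : 0 ≤ ε) :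
    HasRandomPoly f (fun _ => ε) (pdeg ε f) := by
  obtain ⟨P, hP⟩ := exists_evalBool_eq f
  exact .of_hasProbPoly <| Nat.sInf_mem (s := {d | HasProbPoly f ε d})
    ⟨_, (HasRandomPoly.of_evalBool_eq hP).hasProbPoly fun _ => hε⟩

lemma HasRandomPoly.pdeg_le {ι : Type} {f : (ι → Bool) → Bool} {ε : (ι → Bool) → ℝ} {δ : ℝ} {d : ℕ}
    (h : HasRandomPoly f ε d) (hε : ∀ a, ε a ≤ δ) : pdeg δ f ≤ d :=
  Nat.sInf_le (h.hasProbPoly hε)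

namespace HasRandomPoly

variable {ι κ : Type} {f : (ι → Bool) → Bool} {ε : (ι → Bool) → ℝ} {d D : ℕ}

lemma comp [Fintype ι] (hf : HasRandomPoly f ε d) {g : ι → (κ → Bool) → Bool}
    {δ : ι → (κ → Bool) → ℝ} (hg : ∀ i, HasRandomPoly (g i) (δ i) D) :
    HasRandomPoly (fun z => f fun i => g i z) (fun z => ∑ i, δ i z + ε fun i => g i z) (d * D) := by
  obtain ⟨Ω, hΩ, hm, hs, μ, hμ, P, hdeg, herr⟩ := hf
  choose Ω' hΩ' hm' hs' μ' hμ' Q hdeg' herr' using hg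
  refine ⟨Ω × ∀ i, Ω' i, inferInstance, inferInstance, inferInstance, μ.prod (Measure.pi μ'),
    inferInstance, fun ω => bind₁ (fun i => Q i (ω.2 i)) (P ω.1), fun ω =>
      (totalDegree_bind₁_le (fun i => hdeg' i (ω.2 i)) _).trans (by gcongr; exact hdeg ω.1),
    fun z => ?_⟩
  let badInner (i : ι) : Set (Ω × ∀ i, Ω' i) := {ω | evalBool z (Q i (ω.2 i)) ≠ bit (g i z)}
  let badOuter : Set (Ω × ∀ i, Ω' i) :=
    {ω | evalBool (fun i => g i z) (P ω.1) ≠ bit (f fun i => g i z)}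
  have hinner (i : ι) : (μ.prod (Measure.pi μ')).real (badInner i) ≤ δ i z :=
    (((measurePreserving_eval μ' i).comp measurePreserving_snd).measureReal_preimage
      MeasurableSet.of_discrete.nullMeasurableSet).trans_le (herr' i z)
  have houter : (μ.prod (Measure.pi μ')).real badOuter ≤ ε fun i => g i z :=
    (measurePreserving_fst.measureReal_preimage
      MeasurableSet.of_discrete.nullMeasurableSet).trans_le (herr _)
  calc _ ≤ (μ.prod (Measure.pi μ')).real ((⋃ i, badInner i) ∪ badOuter) := by
        refine measureReal_mono fun ω hω => ?_
        by_contra hgood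
        simp only [badInner, badOuter, Set.mem_union, Set.mem_iUnion, Set.mem_ofPred_eq, not_or,
          not_exists, not_not] at hgood
        exact hω ((evalBool_bind₁ hgood.1 (P ω.1)).trans hgood.2)
    _ ≤ (μ.prod (Measure.pi μ')).real (⋃ i, badInner i) +
          (μ.prod (Measure.pi μ')).real badOuter := measureReal_union_le _ _
    _ ≤ _ := add_le_add ((measureReal_iUnion_fintype_le _).trans
        (Finset.sum_le_sum fun i _ => hinner i)) houter

/-- The multilinear polynomial that computes the majority of three bits. -/
noncomputable def majority {R : Type*} [CommRing R] (x y z : R) : R :=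
  x * y + x * z + y * z - 2 * x * y * z

lemma totalDegree_majority_le {P Q R : MvPolynomial ι ℝ} (hP : P.totalDegree ≤ d)
    (hQ : Q.totalDegree ≤ d) (hR : R.totalDegree ≤ d) : (majority P Q R).totalDegree ≤ 3 * d := by
  have mul_le {p q : MvPolynomial ι ℝ} {m n : ℕ} (hp : p.totalDegree ≤ m) (hq : q.totalDegree ≤ n) :
      (p * q).totalDegree ≤ m + n := (totalDegree_mul p q).trans (add_le_add hp hq)
  have add_le {p q : MvPolynomial ι ℝ} (hp : p.totalDegree ≤ 3 * d) (hq : q.totalDegree ≤ 3 * d) :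
      (p + q).totalDegree ≤ 3 * d := (totalDegree_add p q).trans (max_le hp hq)
  have h2 : (2 : MvPolynomial ι ℝ).totalDegree ≤ 0 := (totalDegree_C (2 : ℝ)).le
  exact (totalDegree_sub _ _).trans <| max_le
    (add_le (add_le ((mul_le hP hQ).trans (by lia)) ((mul_le hP hR).trans (by lia)))
      ((mul_le hQ hR).trans (by lia)))
    ((mul_le (mul_le (mul_le h2 hP) hQ) hR).trans (by lia))

lemma majority_of_three {ε : ℝ} (h : HasRandomPoly f (fun _ => ε) d) (hε : ε ≤ 1) :
    HasRandomPoly f (fun _ => 3 * ε ^ 2 - 2 * ε ^ 3) (3 * d) := by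
  obtain ⟨Ω, hΩ, hm, hs, μ, hμ, P, hdeg, herr⟩ := h
  refine ⟨Ω × Ω × Ω, inferInstance, inferInstance, inferInstance, μ.prod (μ.prod μ), inferInstance,
    fun ω => majority (P ω.1) (P ω.2.1) (P ω.2.2),
    fun ω => totalDegree_majority_le (hdeg _) (hdeg _) (hdeg _), fun a =>
      (measureReal_mono fun ω hω => ?_).trans
        (measureReal_two_of_three_le μ .of_discrete (herr a) hε)⟩
  have heval : evalBool a (majority (P ω.1) (P ω.2.1) (P ω.2.2)) =
      majority (evalBool a (P ω.1)) (evalBool a (P ω.2.1)) (evalBool a (P ω.2.2)) := by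
    simp [majority, evalBool]
  simp only [Set.mem_ofPred_eq, heval] at hω
  by_contra hgood
  simp only [Set.mem_union, Set.mem_prod, Set.mem_ofPred_eq, Set.mem_compl_iff,
    Set.mem_univ] at hgood
  cases hfa : f a <;> simp only [hfa, bit_true, bit_false] at hω hgood <;>
    exact hω (by grind [majority])

lemma majority_iterate (h : HasRandomPoly f (fun _ => 1 / 3) d) (k : ℕ) :
    HasRandomPoly f (fun _ => 1 / 3 * (7 / 9) ^ 2 ^ k) (3 ^ (k + 1) * d) := by
  induction k with
  | zero => exact (h.majority_of_three (by norm_num)).mono (fun _ => by norm_num) (by simp)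
  | succ k ih =>
    have hone : 1 / 3 * (7 / 9) ^ 2 ^ k ≤ (1 : ℝ) := by
      have : (7 / 9 : ℝ) ^ 2 ^ k ≤ 1 := pow_le_one₀ (by norm_num) (by norm_num)
      linarith
    refine (ih.majority_of_three hone).mono (fun _ => ?_) (by rw [pow_succ' 3 (k + 1), mul_assoc])
    calc _ ≤ 3 * (1 / 3 * (7 / 9) ^ 2 ^ k) ^ 2 := sub_le_self _ (by positivity)
      _ = 1 / 3 * (7 / 9 : ℝ) ^ 2 ^ (k + 1) := by ring

lemma amplify (h : HasRandomPoly f (fun _ => 1 / 3) d) {r : ℕ} (hr : 1 ≤ r) :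
    HasRandomPoly f (fun _ => (1 / 2) ^ r) (108 * r ^ 2 * d) := by
  set k := Nat.clog 2 (3 * r)
  have hk : 3 * r ≤ 2 ^ k := Nat.le_pow_clog one_lt_two _
  have hk' : 2 ^ k ≤ 2 * (3 * r) := two_pow_clog_le (by lia)
  refine (h.majority_iterate k).mono (fun _ => ?_) ?_
  · calc 1 / 3 * (7 / 9 : ℝ) ^ 2 ^ k ≤ 1 * (7 / 9) ^ (3 * r) := by
          gcongr ?_ * ?_
          · norm_num
          · exact pow_le_pow_of_le_one (by norm_num) (by norm_num) hk
      _ = ((7 / 9) ^ 3) ^ r := by rw [one_mul, pow_mul]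
      _ ≤ (1 / 2) ^ r := by gcongr; norm_num
  · gcongr ?_ * d
    calc 3 ^ (k + 1) ≤ 3 * 4 ^ k := by rw [pow_succ']; gcongr; norm_num
      _ = 3 * (2 ^ k) ^ 2 := by rw [← pow_mul, mul_comm k, pow_mul]; norm_num
      _ ≤ 3 * (2 * (3 * r)) ^ 2 := by gcongr
      _ = 108 * r ^ 2 := by ring

lemma mixture {R : Type} [Finite R] [MeasurableSpace R] [MeasurableSingletonClass R]
    (μ : Measure R) [IsProbabilityMeasure μ] {g : R → (ι → Bool) → Bool}
    (hg : ∀ ρ, HasRandomPoly (g ρ) ε d) (f : (ι → Bool) → Bool) :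
    HasRandomPoly f (fun z => 1 - μ.real {ρ | g ρ z = f z} * (1 - ε z)) d := by
  have := Fintype.ofFinite R
  choose Ω hΩ hm hs ν hν P hdeg herr using hg
  refine ⟨R × ∀ ρ, Ω ρ, inferInstance, inferInstance, inferInstance, μ.prod (Measure.pi ν),
    inferInstance, fun ω => P ω.1 (ω.2 ω.1), fun ω => hdeg _ _, fun z => ?_⟩
  have hgood : μ.real {ρ | g ρ z = f z} * (1 - ε z) ≤ (μ.prod (Measure.pi ν)).real
      {ω | evalBool z (P ω.1 (ω.2 ω.1)) = bit (f z)} := by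
    refine measureReal_mul_le_prod μ _ .of_discrete .of_discrete fun ρ (hρ : g ρ z = f z) => ?_
    calc 1 - ε z ≤ (ν ρ).real {ω | evalBool z (P ρ ω) = bit (g ρ z)} := by
          linarith [herr ρ z,
            measureReal_setOf_not (ν ρ) fun ω => evalBool z (P ρ ω) = bit (g ρ z)]
      _ = _ := by
          rw [hρ]
          exact (measurePreserving_eval ν ρ).measureReal_preimage
            MeasurableSet.of_discrete.nullMeasurableSet |>.symm
  exact (measureReal_setOf_not _ _).trans_le (sub_le_sub_left hgood 1)

lemma one_sub_prod (h : HasRandomPoly f ε d) (k : ℕ) :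
    HasRandomPoly f (fun z => if f z then ε z ^ k else k * ε z) (k * d) := by
  obtain ⟨Ω, hΩ, hm, hs, μ, hμ, P, hdeg, herr⟩ := h
  refine ⟨Fin k → Ω, inferInstance, inferInstance, inferInstance, .pi fun _ => μ, inferInstance,
    fun ω => 1 - ∏ t, (1 - P (ω t)), fun ω => ?_, fun z => ?_⟩
  · calc _ ≤ ∑ t, (1 - P (ω t)).totalDegree :=
          (totalDegree_one_sub_le _).trans (totalDegree_finsetProd _ _)
      _ ≤ ∑ _ : Fin k, d := Finset.sum_le_sum fun t _ => (totalDegree_one_sub_le _).trans (hdeg _)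
      _ = k * d := by simp
  let bad : Set Ω := {ω | evalBool z (P ω) ≠ bit (f z)}
  have heval (ω : Fin k → Ω) : evalBool z (1 - ∏ t, (1 - P (ω t))) =
      1 - ∏ t, (1 - evalBool z (P (ω t))) := by simp [evalBool, map_prod]
  cases hfz : f z
  · calc _ ≤ (Measure.pi fun _ => μ).real (⋃ t : Fin k, {ω | ω t ∈ bad}) := by
          refine measureReal_mono fun ω hω => ?_
          by_contra hgood
          have hzero : ∀ t, evalBool z (P (ω t)) = 0 := by simpa [bad, hfz] using hgood
          simp [heval, hzero] at hω
      _ ≤ ∑ t : Fin k, (Measure.pi fun _ => μ).real {ω | ω t ∈ bad} :=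
          measureReal_iUnion_fintype_le _
      _ ≤ ∑ _ : Fin k, ε z := Finset.sum_le_sum fun t _ =>
          ((measurePreserving_eval (fun _ => μ) t).measureReal_preimage
            MeasurableSet.of_discrete.nullMeasurableSet).trans_le (herr z)
      _ = _ := by simp [hfz]
  · calc _ ≤ (Measure.pi fun _ => μ).real {ω : Fin k → Ω | ∀ t ∈ Finset.univ, ω t ∈ bad} := by
          refine measureReal_mono fun ω hω t _ hgood => ?_
          have hzero : ∏ t, (1 - evalBool z (P (ω t))) = 0 :=
            Finset.prod_eq_zero (Finset.mem_univ t) (by rw [hgood, hfz, bit_true, sub_self])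
          simp [heval, hzero] at hω
      _ = μ.real bad ^ k := by rw [measureReal_pi_forall_mem]; simp
      _ ≤ ε z ^ k := pow_le_pow_left₀ measureReal_nonneg (herr z) k
      _ = _ := by simp [hfz]

end HasRandomPoly

section Isolation

lemma measureReal_uniformOn_univ {Ω : Type*} [Fintype Ω] [MeasurableSpace Ω]
    [MeasurableSingletonClass Ω] (A : Finset Ω) :
    (ProbabilityTheory.uniformOn (Set.univ : Set Ω)).real A = A.card / Fintype.card Ω := by
  rw [measureReal_def, ProbabilityTheory.uniformOn_univ, Measure.count_apply_finset]
  simp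

lemma measureReal_pi_card_filter_eq_one {κ Ω : Type*} [Fintype κ] [MeasurableSpace Ω]
    (ν : Measure Ω) [IsProbabilityMeasure ν] {A : Set Ω} (hA : MeasurableSet A) (s : Finset κ) :
    (Measure.pi fun _ : κ => ν).real {ρ | Finset.card {i ∈ s | ρ i ∈ A} = 1} =
      s.card * (ν.real A * (1 - ν.real A) ^ (s.card - 1)) := by
  let only (i : κ) : Set (κ → Ω) := {ρ | ∀ j ∈ s, ρ j ∈ if j = i then A else Aᶜ}
  have hmem (i : κ) (ρ : κ → Ω) : ρ ∈ only i ↔ ∀ j ∈ s, ρ j ∈ A ↔ j = i :=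
    forall₂_congr fun j _ => by split_ifs with h <;> simp [h]
  have hset : {ρ : κ → Ω | Finset.card {i ∈ s | ρ i ∈ A} = 1} = ⋃ i ∈ s, only i := by
    ext ρ
    simp only [Set.mem_ofPred_eq, Finset.card_eq_one, Set.mem_iUnion, Finset.ext_iff,
      Finset.mem_filter, Finset.mem_singleton, hmem, exists_prop]
    exact exists_congr fun i => ⟨by grind, by grind⟩
  have hdisj : (s : Set κ).PairwiseDisjoint only := fun i hi j _ hij =>
    Set.disjoint_left.2 fun ρ hρi hρj =>
      hij (((hmem j ρ).1 hρj i hi).1 (((hmem i ρ).1 hρi i hi).2 rfl))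
  have hmeas (i : κ) : MeasurableSet (only i) :=
    .pi (Set.to_countable (s : Set κ)) fun j _ => by
      split_ifs
      exacts [hA, hA.compl]
  have hprob {i : κ} (hi : i ∈ s) : (Measure.pi fun _ : κ => ν).real (only i) =
      ν.real A * (1 - ν.real A) ^ (s.card - 1) := by
    rw [measureReal_pi_forall_mem, ← Finset.mul_prod_erase s _ hi, if_pos rfl,
      ← Finset.card_erase_of_mem hi, ← probReal_compl_eq_one_sub hA]
    refine congrArg _ (Finset.prod_eq_pow_card fun j hj => ?_)
    rw [if_neg (Finset.ne_of_mem_erase hj)]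
  rw [hset, measureReal_biUnion_finset hdisj fun i _ => hmeas i,
    Finset.sum_congr rfl fun i hi => hprob hi, Finset.sum_const, nsmul_eq_mul]

lemma le_measureReal_pi_card_filter_eq_one {κ Ω : Type*} [Fintype κ] [MeasurableSpace Ω]
    (ν : Measure Ω) [IsProbabilityMeasure ν] {A : Set Ω} (hA : MeasurableSet A) {s : Finset κ}
    (hs : s.Nonempty) (hlow : 1 / 4 ≤ s.card * ν.real A) (hup : s.card * ν.real A ≤ 1 / 2) :
    3 / 16 ≤ (Measure.pi fun _ : κ => ν).real {ρ | Finset.card {i ∈ s | ρ i ∈ A} = 1} := by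
  rw [measureReal_pi_card_filter_eq_one ν hA]
  have hp : 0 ≤ ν.real A := measureReal_nonneg
  have hp1 : ν.real A ≤ 1 := measureReal_le_one
  have hcard : ((s.card - 1 : ℕ) : ℝ) = s.card - 1 := Nat.cast_pred hs.card_pos
  have bernoulli := one_add_mul_le_pow (show -2 ≤ -ν.real A by linarith) (s.card - 1)
  rw [hcard, ← sub_eq_add_neg] at bernoulli
  calc 3 / 16 ≤ s.card * ν.real A * (1 - s.card * ν.real A) := by nlinarith
    _ ≤ s.card * ν.real A * (1 - ν.real A) ^ (s.card - 1) := by gcongr; linarith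
    _ = _ := mul_assoc _ _ _

lemma le_measureReal_uniform_card_filter_lt {κ : Type*} [Fintype κ] {J t : ℕ} (htJ : t ≤ J)
    {s : Finset κ} (hs : s.Nonempty) (hlow : 2 ^ t ≤ 2 * s.card) (hup : s.card ≤ 2 ^ t) :
    3 / 16 ≤ (Measure.pi fun _ : κ =>
      ProbabilityTheory.uniformOn (Set.univ : Set (Fin (2 ^ (J + 1))))).real
        {ρ | Finset.card {i ∈ s | (ρ i : ℕ) < 2 ^ (J - t)} = 1} := by
  let A : Finset (Fin (2 ^ (J + 1))) := {x | (x : ℕ) < 2 ^ (J - t)}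
  have hcard : A.card = 2 ^ (J - t) := by
    have : 2 ^ (J - t) ≤ 2 ^ (J + 1) := Nat.pow_le_pow_right two_pos (by lia)
    simp [A, Fin.card_filter_val_lt, this]
  have hmean : s.card * (ProbabilityTheory.uniformOn Set.univ).real (A : Set (Fin (2 ^ (J + 1)))) =
      s.card / 2 ^ (t + 1) := by
    rw [measureReal_uniformOn_univ, hcard, Fintype.card_fin,
      show J + 1 = (J - t) + (t + 1) by lia, pow_add 2 (J - t)]
    push_cast
    field_simp
  have hlow' : (2 ^ t : ℝ) ≤ 2 * s.card := mod_cast hlow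
  have hup' : (s.card : ℝ) ≤ 2 ^ t := mod_cast hup
  convert! le_measureReal_pi_card_filter_eq_one _ (A := (A : Set (Fin (2 ^ (J + 1)))))
    .of_discrete hs ?_ ?_ using 6
  · simp [A]
  · infer_instance
  · rw [hmean, pow_succ, div_le_div_iff₀ (by norm_num) (by positivity)]
    linarith
  · rw [hmean, pow_succ, div_le_div_iff₀ (by positivity) (by norm_num)]
    linarith

/-- A random family of sets that isolates, with probability bounded away from zero, a single
element of every nonempty set: the combinatorial core of the Valiant–Vazirani reduction. -/
def Isolating {R κ ι : Type*} [DecidableEq ι] [MeasurableSpace R] (μ : Measure R)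
    (T : R → κ → Finset ι) : Prop :=
  ∀ s : Finset ι, s.Nonempty → 3 / 16 ≤ μ.real {ρ | ∃ l, (s ∩ T ρ l).card = 1}

lemma exists_isolating {ι : Type} [Fintype ι] [DecidableEq ι] {J : ℕ}
    (hJ : Nat.clog 2 (Fintype.card ι) ≤ J) :
    ∃ (R : Type) (_ : Finite R) (_ : MeasurableSpace R) (_ : MeasurableSingletonClass R)
      (μ : Measure R) (_ : IsProbabilityMeasure μ)
      (T : R → Fin (J + 1) → Finset ι), Isolating μ T := by
  refine ⟨ι → Fin (2 ^ (J + 1)), inferInstance, inferInstance, inferInstance,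
    Measure.pi fun _ => ProbabilityTheory.uniformOn Set.univ, inferInstance,
    fun ρ l => {i | (ρ i : ℕ) < 2 ^ (l : ℕ)}, fun s hs => ?_⟩
  have htJ : Nat.clog 2 s.card ≤ J := (Nat.clog_mono_right 2 s.card_le_univ).trans hJ
  refine (le_measureReal_uniform_card_filter_lt htJ hs (two_pow_clog_le hs.card_ne_zero)
    (Nat.le_pow_clog one_lt_two _)).trans (measureReal_mono fun ρ hρ => ?_)
  exact ⟨⟨J - Nat.clog 2 s.card, by lia⟩, by simpa [Finset.inter_filter] using hρ⟩

end Isolation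

section OrReduction

lemma ORf_eq_true_iff {b : ℕ} {z : Fin b → Bool} : ORf b z = true ↔ ∃ i, z i = true := by
  simp [ORf]

lemma ORf_eq_false_iff {b : ℕ} {z : Fin b → Bool} : ORf b z = false ↔ z = ⊥ := by
  simp [ORf, funext_iff]

lemma hasRandomPoly_or (p : ℕ) :
    HasRandomPoly (ORf p) (fun w => if ORf p w then 13 / 16 else 0) (Nat.clog 2 p + 1) := by
  obtain ⟨R, hR, hm, hs, μ, hμ, T, hT⟩ :=
    exists_isolating (ι := Fin p) (J := Nat.clog 2 p) (by simp)
  refine ⟨R, hR, hm, hs, μ, hμ, fun ρ => 1 - ∏ t, (1 - ∑ l ∈ T ρ t, X l), fun ρ => ?_,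
    fun w => ?_⟩
  · have hfactor (t) : (1 - ∑ l ∈ T ρ t, X l : MvPolynomial (Fin p) ℝ).totalDegree ≤ 1 :=
      (totalDegree_one_sub_le _).trans (totalDegree_finsetSum_le fun l _ => (totalDegree_X l).le)
    calc _ ≤ ∑ t, (1 - ∑ l ∈ T ρ t, X l : MvPolynomial (Fin p) ℝ).totalDegree :=
          (totalDegree_one_sub_le _).trans (totalDegree_finsetProd _ _)
      _ ≤ ∑ _ : Fin (Nat.clog 2 p + 1), 1 :=
          Finset.sum_le_sum fun t _ => hfactor t
      _ = Nat.clog 2 p + 1 := by simp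
  have heval (ρ : R) : evalBool w (1 - ∏ t, (1 - ∑ l ∈ T ρ t, X l)) =
      1 - ∏ t, (1 - ((({l | w l} : Finset (Fin p)) ∩ T ρ t).card : ℝ)) := by
    simp [evalBool, map_prod, Finset.filter_inter]
  cases hw : ORf p w
  · have hempty : ({l | w l} : Finset (Fin p)) = ∅ := by simp [ORf_eq_false_iff.1 hw]
    simp [heval, hempty, hw]
  · have hiso := hT {l | w l} <| by
      simpa [Finset.filter_nonempty_iff] using ORf_eq_true_iff.1 hw
    have hgood : {ρ | ∃ t, (({l | w l} : Finset (Fin p)) ∩ T ρ t).card = 1} ⊆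
        {ρ | evalBool w (1 - ∏ t, (1 - ∑ l ∈ T ρ t, X l)) = bit true} := fun ρ ⟨t, ht⟩ => by
      have hzero := Finset.prod_eq_zero (f := fun t =>
        1 - ((({l | w l} : Finset (Fin p)) ∩ T ρ t).card : ℝ)) (Finset.mem_univ t) (by simp [ht])
      simp [heval, hzero]
    simp only [ne_eq, measureReal_setOf_not, hw, if_true]
    linarith [hiso.trans (measureReal_mono hgood)]

lemma HasRandomPoly.comp_affine {ι κ : Type} [Finite ι] {f : (ι → Bool) → Bool}
    {ε : (ι → Bool) → ℝ} {d : ℕ} (hf : HasRandomPoly f ε d) {X : (κ → Bool) → ι → Bool}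
    (hX : ∀ i, HasRandomPoly (fun z => X z i) (fun _ => 0) 1) :
    HasRandomPoly (fun z => f (X z)) (fun z => ε (X z)) d := by
  have := Fintype.ofFinite ι
  exact (hf.comp hX).mono (fun z => by simp) (by simp)

lemma hasRandomPoly_piecewise_bot {ι : Type} [DecidableEq ι] (T : Finset ι) (i : ι) :
    HasRandomPoly (fun z : ι → Bool => T.piecewise z ⊥ i) (fun _ => 0) 1 := by
  by_cases hi : i ∈ T
  · simpa [hi] using HasRandomPoly.coord i
  · simpa [hi] using HasRandomPoly.const false 1

variable {b : ℕ} {h : (Fin b → Bool) → Bool} {D : ℕ}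

/-- A random coordinate set isolates a `1` of `z ≠ ⊥`, and then `h` of the restriction of `z` is the
value of `h` at a unit vector; `OR` is thus the `OR` of few restrictions of `h`. -/
lemma HasRandomPoly.or_of_unit_vectors {δ : ℝ} {J : ℕ} (hJ : Nat.clog 2 b ≤ J)
    (hh : HasRandomPoly h (fun _ => δ) D)
    (h0 : h ⊥ = false) (h1 : ∀ i, h (Function.update ⊥ i true) = true)
    (hδ : ((J + 1 : ℕ) : ℝ) * δ ≤ 1 / 256) :
    HasRandomPoly (ORf b) (fun z => if ORf b z then 31 / 32 else 1 / 256)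
      ((Nat.clog 2 (J + 1) + 1) * D) := by
  obtain ⟨R, hR, hm, hs, μ, hμ, T, hT⟩ := exists_isolating (ι := Fin b) (J := J) (by simpa)
  let g (ρ : R) (z : Fin b → Bool) : Bool := ORf (J + 1) fun l => h ((T ρ l).piecewise z ⊥)
  have g_bot (ρ : R) : g ρ ⊥ = false := by
    simp [g, h0, ORf_eq_false_iff, funext_iff, Finset.piecewise_same]
  have hg (ρ : R) : HasRandomPoly (g ρ) (fun z => 1 / 256 + if ORf b z then 13 / 16 else 0)
      ((Nat.clog 2 (J + 1) + 1) * D) := by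
    refine ((hasRandomPoly_or (J + 1)).comp fun l =>
      hh.comp_affine (hasRandomPoly_piecewise_bot (T ρ l))).mono (fun z => ?_) le_rfl
    have hsum : ∑ _ : Fin (J + 1), δ ≤ 1 / 256 := by simpa using hδ
    refine add_le_add hsum ?_
    cases hz : ORf b z
    · obtain rfl := ORf_eq_false_iff.1 hz
      exact (if_neg (by simpa [g] using g_bot ρ)).le
    · simp only [if_true]
      split_ifs <;> norm_num
  refine (HasRandomPoly.mixture μ hg (ORf b)).mono (fun z => ?_) le_rfl
  cases hz : ORf b z
  · obtain rfl := ORf_eq_false_iff.1 hz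
    simp [g_bot]
  · have hiso : 3 / 16 ≤ μ.real {ρ | g ρ z = true} := by
      refine (hT {i | z i} (by simpa [Finset.filter_nonempty_iff] using ORf_eq_true_iff.1 hz)).trans
        (measureReal_mono fun ρ ⟨l, hl⟩ => ORf_eq_true_iff.2 ⟨l, ?_⟩)
      obtain ⟨i, hi⟩ := Finset.card_eq_one.1 hl
      have hunit : (T ρ l).piecewise z ⊥ = Function.update ⊥ i true := by
        ext j
        have hj := Finset.ext_iff.1 hi j
        simp only [Finset.mem_inter, Finset.mem_filter_univ, Finset.mem_singleton] at hj
        by_cases hjT : j ∈ T ρ l <;> by_cases hji : j = i <;> simp_all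
      exact hunit ▸ h1 i
    simp only [if_true]
    linarith

lemma HasRandomPoly.pdeg_or_le (hh : HasRandomPoly h (fun _ => 1 / 3) D)
    (h0 : h ⊥ = false) (h1 : ∀ i, h (Function.update ⊥ i true) = true) :
    pdeg (1 / 3) (ORf b) ≤ 6912 * (Nat.clog 2 (Nat.clog 2 b + 1) + 8) ^ 3 * D := by
  set p := Nat.clog 2 b + 1
  set t := Nat.clog 2 p
  have herr : (p : ℝ) * (1 / 2) ^ (t + 8) ≤ 1 / 256 := by
    have : (p : ℝ) ≤ 2 ^ t := mod_cast Nat.le_pow_clog one_lt_two p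
    calc (p : ℝ) * (1 / 2) ^ (t + 8) ≤ 2 ^ t * (1 / 2) ^ (t + 8) := by gcongr
      _ = (2 * (1 / 2)) ^ t * (1 / 2) ^ 8 := by rw [mul_pow, pow_add]; ring
      _ = 1 / 256 := by norm_num
  have hor :=
    ((hh.amplify (r := t + 8) (by lia)).or_of_unit_vectors le_rfl h0 h1 herr).one_sub_prod 64
  calc pdeg (1 / 3) (ORf b) ≤ 64 * ((t + 1) * (108 * (t + 8) ^ 2 * D)) := by
        refine hor.pdeg_le fun z => ?_
        cases ORf b z <;> norm_num
    _ ≤ 64 * ((t + 8) * (108 * (t + 8) ^ 2 * D)) := by gcongr; norm_num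
    _ = 6912 * (t + 8) ^ 3 * D := by ring

end OrReduction

section BlockSensitivity

variable {ι : Type} {f : (ι → Bool) → Bool} {a : ι → Bool}

/-- The point `a` with the bits in the block `B` flipped. -/
noncomputable def flip (a : ι → Bool) (B : Finset ι) : ι → Bool := B.piecewise (fun j => !a j) a

/-- `C` is a family of disjoint blocks to which `f` is sensitive at `a`. -/
def SensitiveBlocks (f : (ι → Bool) → Bool) (a : ι → Bool) (C : Finset (Finset ι)) : Prop :=
  (∀ B ∈ C, f (flip a B) ≠ f a) ∧ (C : Set (Finset ι)).PairwiseDisjoint id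

/-- The block sensitivity `bs(f)`. -/
noncomputable def blockSensitivity [Fintype ι] (f : (ι → Bool) → Bool) : ℕ :=
  ({p : (ι → Bool) × Finset (Finset ι) | SensitiveBlocks f p.1 p.2} : Finset _).sup
    fun p => p.2.card

lemma SensitiveBlocks.card_le [Fintype ι] {C : Finset (Finset ι)} (hC : SensitiveBlocks f a C) :
    C.card ≤ blockSensitivity f :=
  Finset.le_sup (f := fun p : (ι → Bool) × Finset (Finset ι) => p.2.card) (b := (a, C)) (by simpa)

lemma exists_sensitiveBlocks_card_eq [Fintype ι] (f : (ι → Bool) → Bool) :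
    ∃ a C, SensitiveBlocks f a C ∧ C.card = blockSensitivity f := by
  obtain ⟨⟨a, C⟩, hC, hcard⟩ := Finset.exists_mem_eq_sup
    {p : (ι → Bool) × Finset (Finset ι) | SensitiveBlocks f p.1 p.2}
    ⟨(⊥, ∅), (Finset.mem_filter_univ _).2 (by simp [SensitiveBlocks])⟩ fun p => p.2.card
  exact ⟨a, C, by simpa using hC, hcard.symm⟩

lemma hasRandomPoly_flip_biUnion {k : ℕ} (a : ι → Bool) {B : Fin k → Finset ι}
    (hB : Pairwise (Function.onFun Disjoint B)) (j : ι) :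
    HasRandomPoly (fun z : Fin k → Bool => flip a (({l | z l} : Finset (Fin k)).biUnion B) j)
      (fun _ => 0) 1 := by
  by_cases hj : ∃ l, j ∈ B l
  · obtain ⟨l, hl⟩ := hj
    have hmem (z : Fin k → Bool) : j ∈ ({l | z l} : Finset (Fin k)).biUnion B ↔ z l = true := by
      simp only [Finset.mem_biUnion, Finset.mem_filter_univ]
      refine ⟨fun ⟨l', hz, hl'⟩ => ?_, fun hz => ⟨l, hz, hl⟩⟩
      rwa [← hB.eq (Finset.not_disjoint_iff.2 ⟨j, hl', hl⟩)]
    cases ha : a j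
    · convert HasRandomPoly.coord l using 2 with z
      cases hz : z l <;> simp [flip, Finset.piecewise, hmem, hz, ha]
    · convert (HasRandomPoly.coord l).neg using 2 with z
      cases hz : z l <;> simp [flip, Finset.piecewise, hmem, hz, ha]
  · convert HasRandomPoly.const (a j) 1 using 2 with z
    simp only [not_exists] at hj
    simp [flip, Finset.piecewise, hj]

lemma SensitiveBlocks.pdeg_or_le [Finite ι] {C : Finset (Finset ι)} (hC : SensitiveBlocks f a C)
    {d : ℕ} (hf : HasRandomPoly f (fun _ => 1 / 3) d) :
    pdeg (1 / 3) (ORf C.card) ≤ 6912 * (Nat.clog 2 (Nat.clog 2 C.card + 1) + 8) ^ 3 * d := by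
  wlog ha : f a = false generalizing f
  · exact this (f := fun x => !f x) ⟨by simpa using hC.1, hC.2⟩ hf.neg (by simpa using ha)
  let B (l : Fin C.card) : Finset ι := C.equivFin.symm l
  have hB : Pairwise (Function.onFun Disjoint B) := fun l l' hl =>
    hC.2 (C.equivFin.symm l).2 (C.equivFin.symm l').2
      (Subtype.val_injective.ne (C.equivFin.symm.injective.ne hl))
  refine (hf.comp_affine (hasRandomPoly_flip_biUnion a hB)).pdeg_or_le ?_ fun l => ?_
  · have hfilter : ({l | (⊥ : Fin C.card → Bool) l = true} : Finset (Fin C.card)) = ∅ := by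
      simp
    rwa [hfilter, flip, Finset.biUnion_empty, Finset.piecewise_empty]
  · have hfilter : ({l' | Function.update (⊥ : Fin C.card → Bool) l true l' = true} :
        Finset (Fin C.card)) = {l} := by
      ext l'
      by_cases hl : l' = l <;> simp [hl]
    simpa [hfilter, ha] using hC.1 (B l) (C.equivFin.symm l).2

lemma pdeg_or_blockSensitivity_le [Fintype ι] (f : (ι → Bool) → Bool) :
    pdeg (1 / 3) (ORf (blockSensitivity f)) ≤
      6912 * (Nat.clog 2 (Nat.clog 2 (blockSensitivity f) + 1) + 8) ^ 3 * pdeg (1 / 3) f := by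
  obtain ⟨a, C, hC, hcard⟩ := exists_sensitiveBlocks_card_eq f
  exact hcard ▸ hC.pdeg_or_le (hasRandomPoly_pdeg f (by norm_num))

end BlockSensitivity

section Certificates

variable {ι : Type} {f : (ι → Bool) → Bool} {a : ι → Bool}

/-- The coordinates in `U` certify the value of `f` at `a`. -/
def IsCertificate (f : (ι → Bool) → Bool) (a : ι → Bool) (U : Finset ι) : Prop :=
  ∀ y, (∀ j ∈ U, y j = a j) → f y = f a

/-- `B` is a minimal block to which `f` is sensitive at `a`. -/
def MinimalBlock (f : (ι → Bool) → Bool) (a : ι → Bool) (B : Finset ι) : Prop :=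
  Minimal (fun B => f (flip a B) ≠ f a) B

lemma flip_flip_singleton {B : Finset ι} {j : ι} (hj : j ∈ B) :
    flip (flip a B) {j} = flip a (B.erase j) := by
  ext k
  by_cases hk : k = j
  · subst hk
    simp [flip, hj]
  · by_cases hkB : k ∈ B <;> simp [flip, hk, hkB]

lemma flip_setOf_ne [Fintype ι] (a y : ι → Bool) : flip a ({j | y j ≠ a j} : Finset ι) = y := by
  ext j
  cases hy : y j <;> cases ha : a j <;> simp [flip, Finset.piecewise, hy, ha]

lemma MinimalBlock.nonempty {B : Finset ι} (hB : MinimalBlock f a B) : B.Nonempty := by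
  rw [Finset.nonempty_iff_ne_empty]
  rintro rfl
  exact hB.prop (by simp [flip])

variable [Fintype ι]

lemma MinimalBlock.card_le {B : Finset ι} (hB : MinimalBlock f a B) :
    B.card ≤ blockSensitivity f := by
  have hsens : SensitiveBlocks f (flip a B) (B.map ⟨fun j => {j}, Finset.singleton_injective⟩) := by
    refine ⟨fun C hC => ?_, ?_⟩
    · obtain ⟨j, hj, rfl⟩ := Finset.mem_map.1 hC
      have herase : f (flip a (B.erase j)) = f a :=
        not_not.1 (hB.not_prop_of_lt (Finset.erase_ssubset hj))
      simpa [flip_flip_singleton hj, herase] using hB.prop.symm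
    · intro C hC C' hC' hne
      obtain ⟨j, _, rfl⟩ := Finset.mem_map.1 hC
      obtain ⟨k, _, rfl⟩ := Finset.mem_map.1 hC'
      exact Finset.disjoint_singleton.2 fun hjk => hne (by rw [hjk])
  simpa using hsens.card_le

/-- The union of a maximal disjoint family of minimal sensitive blocks is a certificate: it meets
every sensitive block. -/
lemma exists_isCertificate (f : (ι → Bool) → Bool) (a : ι → Bool) :
    ∃ U, U.card ≤ blockSensitivity f ^ 2 ∧ IsCertificate f a U := by
  obtain ⟨C, hC⟩ := (Set.toFinite
    {C : Finset (Finset ι) | (∀ B ∈ C, MinimalBlock f a B) ∧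
      (C : Set (Finset ι)).PairwiseDisjoint id}).exists_maximal ⟨∅, by simp⟩
  have hblocks : SensitiveBlocks f a C := ⟨fun B hB => (hC.prop.1 B hB).prop, hC.prop.2⟩
  refine ⟨C.biUnion id, ?_, fun y hy => ?_⟩
  · calc (C.biUnion id).card ≤ C.card * blockSensitivity f :=
          Finset.card_biUnion_le_card_mul _ _ _ fun B hB => (hC.prop.1 B hB).card_le
      _ ≤ blockSensitivity f ^ 2 := by rw [sq]; gcongr; exact hblocks.card_le
  · by_contra hne
    obtain ⟨B, hBsub, hB⟩ := exists_minimal_le_of_wellFoundedLT (fun B => f (flip a B) ≠ f a)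
      ({j | y j ≠ a j} : Finset ι) (by rwa [flip_setOf_ne])
    have hdisj (B') (hB' : B' ∈ C) : Disjoint B B' := Finset.disjoint_left.2 fun j hj hj' =>
      (Finset.mem_filter_univ _).1 (hBsub hj) (hy j (Finset.mem_biUnion.2 ⟨B', hB', hj'⟩))
    have hBC : B ∈ C := by
      refine hC.le_of_ge (y := insert B C) ⟨?_, ?_⟩ (Finset.subset_insert B C)
        (Finset.mem_insert_self B C)
      · simpa using ⟨hB, hC.prop.1⟩
      · rw [Finset.coe_insert]
        exact hC.prop.2.insert fun B' hB' _ => hdisj B' hB'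
    exact (MinimalBlock.nonempty hB).ne_empty (disjoint_self.1 (hdisj B hBC))

lemma exists_forall_eq_xor_of_trulyVariate (hf : TrulyVariate f) (i : ι) :
    ∃ (W : Finset ι) (a : ι → Bool) (c : Bool), i ∉ W ∧ W.card ≤ 2 * blockSensitivity f ^ 2 ∧
      ∀ y, (∀ j ∈ W, y j = a j) → f y = (c ^^ y i) := by
  obtain ⟨a, ha⟩ := hf i
  obtain ⟨U, hU, hfU⟩ := exists_isCertificate f a
  obtain ⟨V, hV, hfV⟩ := exists_isCertificate f (Function.update a i (!a i))
  refine ⟨(U ∪ V).erase i, a, f a ^^ a i, by simp, ?_, fun y hy => ?_⟩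
  · linarith [(U ∪ V).card_erase_le (a := i), Finset.card_union_le U V]
  · have hWy (j) (hj : j ∈ U ∪ V) (hji : j ≠ i) : y j = a j := hy j (Finset.mem_erase.2 ⟨hji, hj⟩)
    by_cases hyi : y i = a i
    · rw [hyi, Bool.xor_assoc, Bool.xor_self, Bool.xor_false]
      refine hfU y fun j hj => ?_
      obtain rfl | hji := eq_or_ne j i
      · exact hyi
      · exact hWy j (Finset.mem_union_left _ hj) hji
    · have hyi' : y i = !a i := Bool.eq_not.2 hyi
      rw [hyi', Bool.xor_assoc, Bool.xor_not_self, Bool.xor_true, ← Bool.eq_not.2 ha]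
      refine hfV y fun j hj => ?_
      obtain rfl | hji := eq_or_ne j i
      · simp [hyi']
      · simpa [hji] using hWy j (Finset.mem_union_right _ hj) hji

end Certificates

section Hashing

open ProbabilityTheory

variable {ι κ : Type*} [Fintype ι] [Fintype κ] [Nonempty κ] [MeasurableSpace κ]
  [MeasurableSingletonClass κ]

lemma measureReal_pi_uniform_apply_eq_apply_le {x y : ι} (hxy : x ≠ y) :
    (Measure.pi fun _ : ι => uniformOn (Set.univ : Set κ)).real {ρ | ρ x = ρ y} ≤
      1 / Fintype.card κ := by
  have hunion : {ρ : ι → κ | ρ x = ρ y} =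
      ⋃ c, {ρ | ∀ i ∈ ({x, y} : Finset ι), ρ i ∈ ({c} : Set κ)} := by
    ext ρ
    simpa using eq_comm
  have hpoint (c : κ) : (uniformOn (Set.univ : Set κ)).real {c} = 1 / Fintype.card κ := by
    simpa using measureReal_uniformOn_univ {c}
  rw [hunion]
  refine (measureReal_iUnion_fintype_le _).trans_eq ?_
  simp only [measureReal_pi_forall_mem, Finset.prod_pair hxy, hpoint, Finset.sum_const,
    Finset.card_univ, nsmul_eq_mul]
  field_simp

lemma measureReal_pi_uniform_not_injOn_le (s : Finset ι) :
    (Measure.pi fun _ : ι => uniformOn (Set.univ : Set κ)).real {ρ | ¬Set.InjOn ρ s} ≤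
      s.card ^ 2 / Fintype.card κ := by
  have hcover : {ρ : ι → κ | ¬Set.InjOn ρ s} ⊆ ⋃ p ∈ s.offDiag, {ρ | ρ p.1 = ρ p.2} := by
    intro ρ hρ
    simp only [Set.mem_ofPred_eq, Set.InjOn, not_forall] at hρ
    obtain ⟨x, hx, y, hy, hρxy, hxy⟩ := hρ
    have hpair : (x, y) ∈ s.offDiag := Finset.mem_offDiag.2 ⟨hx, hy, hxy⟩
    exact Set.mem_biUnion hpair hρxy
  calc _ ≤ ∑ p ∈ s.offDiag, (Measure.pi fun _ : ι => uniformOn (Set.univ : Set κ)).real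
          {ρ | ρ p.1 = ρ p.2} :=
        (measureReal_mono hcover (measure_ne_top _ _)).trans (measureReal_biUnion_finset_le _ _)
    _ ≤ ∑ _ ∈ s.offDiag, (1 / Fintype.card κ : ℝ) := Finset.sum_le_sum fun p hp =>
        measureReal_pi_uniform_apply_eq_apply_le (Finset.mem_offDiag.1 hp).2.2
    _ = s.offDiag.card / Fintype.card κ := by simp [div_eq_mul_inv]
    _ ≤ s.card ^ 2 / Fintype.card κ := by
        gcongr
        rw [Finset.offDiag_card, sq]
        exact_mod_cast Nat.sub_le _ _

omit [MeasurableSpace κ] [MeasurableSingletonClass κ] in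
lemma exists_injOn_of_card_le {W : ι → Finset ι} {K : ℕ} (hW : ∀ i, (W i).card ≤ K)
    (hK : 2 * K ^ 2 ≤ Fintype.card κ) :
    ∃ (ρ : ι → κ) (c : κ) (G : Finset ι), Fintype.card ι ≤ 2 * Fintype.card κ * G.card ∧
      ∀ i ∈ G, ρ i = c ∧ Set.InjOn ρ (W i) := by
  let _ : MeasurableSpace κ := ⊤
  obtain ⟨ρ, hρ⟩ := exists_card_filter_le (ε := 1 / 2)
    (Measure.pi fun _ : ι => uniformOn (Set.univ : Set κ)) (fun i ρ => ¬Set.InjOn ρ (W i))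
    fun i => by
      refine (measureReal_pi_uniform_not_injOn_le (W i)).trans ?_
      have hWi : ((W i).card : ℝ) ^ 2 ≤ K ^ 2 := by gcongr; exact hW i
      have hK' : 2 * (K : ℝ) ^ 2 ≤ Fintype.card κ := mod_cast hK
      rw [div_le_div_iff₀ (by positivity) (by norm_num)]
      linarith
  let good : Finset ι := {i | Set.InjOn ρ (W i)}
  have hgood : (Fintype.card ι : ℝ) ≤ 2 * good.card := by
    have hsplit : (good.card : ℝ) + Finset.card {i | ¬Set.InjOn ρ (W i)} = Fintype.card ι := by
      exact_mod_cast Finset.card_filter_add_card_filter_not (s := Finset.univ) _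
    have hbad : (Finset.card {i | ¬Set.InjOn ρ (W i)} : ℝ) ≤ 1 / 2 * Fintype.card ι := by
      convert hρ
    linarith
  obtain ⟨c, -, hc⟩ := Finset.exists_le_card_fiber_of_nsmul_le_card_of_maps_to
    (b := (good.card / Fintype.card κ : ℝ)) (fun i (_ : i ∈ good) => Finset.mem_univ (ρ i))
    Finset.univ_nonempty (by simp [mul_div_cancel₀])
  refine ⟨ρ, c, {i ∈ good | ρ i = c}, ?_, fun i hi => ?_⟩
  · rw [div_le_iff₀ (by positivity)] at hc
    have : (Fintype.card ι : ℝ) ≤ 2 * Fintype.card κ * Finset.card {i ∈ good | ρ i = c} := by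
      linarith
    exact_mod_cast this
  · rw [Finset.mem_filter, Finset.mem_filter_univ] at hi
    exact hi.symm

end Hashing

section Counting

variable {G : Type*}

lemma exists_card_le_finrank_forall_eq_zero [Finite G] (V : Submodule ℝ (G → ℝ)) (S : Finset G) :
    ∃ B ⊆ S, B.card ≤ Module.finrank ℝ V ∧
      ∀ v ∈ V, (∀ i ∈ B, v i = 0) → ∀ i ∈ S, v i = 0 := by
  let φ (i : G) : Module.Dual ℝ V := (LinearMap.proj i).domRestrict V
  obtain ⟨B, hBS, -, hspan, hB⟩ := exists_linearIndepOn_extension (v := φ)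
    (linearIndepOn_empty ℝ φ) (Set.empty_subset (S : Set G))
  lift B to Finset G using Set.toFinite B
  refine ⟨B, Finset.coe_subset.1 hBS, ?_, fun v hv hvB i hi => ?_⟩
  · have hcard := hB.linearIndependent.fintype_card_le_finrank
    simpa [Subspace.dual_finrank_eq] using hcard
  · have hker : Submodule.span ℝ (φ '' B) ≤ LinearMap.ker (Module.Dual.eval ℝ V ⟨v, hv⟩) := by
      rw [Submodule.span_le, Set.image_subset_iff]
      exact fun j hj => hvB j hj
    exact hker (hspan (Set.mem_image_of_mem φ hi))

variable [Fintype G]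

lemma card_setOf_eqOn_compl_le (V : Submodule ℝ (G → ℝ)) (E : Finset G) :
    Finset.card {g : G → Bool | ∃ v ∈ V, ∀ i ∉ E, v i = bit (g i)} ≤
      2 ^ (E.card + Module.finrank ℝ V) := by
  obtain ⟨B, hBE, hB, hdet⟩ := exists_card_le_finrank_forall_eq_zero V Eᶜ
  have hinj : Set.InjOn (fun (g : G → Bool) (i : ↥(E ∪ B)) => g i)
      ({g : G → Bool | ∃ v ∈ V, ∀ i ∉ E, v i = bit (g i)} : Finset (G → Bool)) := by
    intro g hg g' hg' heq
    rw [Finset.mem_coe, Finset.mem_filter_univ] at hg hg'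
    obtain ⟨v, hv, hvg⟩ := hg
    obtain ⟨v', hv', hvg'⟩ := hg'
    have hEB (i) (hi : i ∈ E ∪ B) : g i = g' i := congrFun heq ⟨i, hi⟩
    ext i
    by_cases hi : i ∈ E
    · rw [hEB i (Finset.mem_union_left _ hi)]
    · have hsub := hdet (v - v') (V.sub_mem hv hv') (fun j hj => ?_) i (Finset.mem_compl.2 hi)
      · rw [Pi.sub_apply, hvg i hi, hvg' i hi] at hsub
        cases hgi : g i <;> cases hgi' : g' i <;> simp_all
      · have hjE := Finset.mem_compl.1 (hBE hj)
        simp [hvg j hjE, hvg' j hjE, hEB j (Finset.mem_union_right _ hj)]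
  calc _ ≤ (Finset.univ : Finset (↥(E ∪ B) → Bool)).card :=
        Finset.card_le_card_of_injOn _ (fun _ _ => Finset.mem_coe.2 (Finset.mem_univ _)) hinj
    _ = 2 ^ (E ∪ B).card := by
        rw [Finset.card_univ, Fintype.card_fun, Fintype.card_bool, Fintype.card_coe]
    _ ≤ 2 ^ (E.card + Module.finrank ℝ V) := by
        gcongr
        · norm_num
        · exact (Finset.card_union_le E B).trans (by lia)

/-- A union bound over the error set `E`. The weight `8 ^ k * (1 / 4) ^ #E`, which dominates
`2 ^ #E` when `#E ≤ k`, turns the sum over small sets into a binomial expansion. -/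
lemma two_pow_card_le_of_forall_exists_card_le {V : Submodule ℝ (G → ℝ)} {k : ℕ}
    (h : ∀ g : G → Bool, ∃ v ∈ V, Finset.card {i | v i ≠ bit (g i)} ≤ k) :
    (2 : ℝ) ^ Fintype.card G ≤
      2 ^ Module.finrank ℝ V * (8 ^ k * (5 / 4) ^ Fintype.card G) := by
  let agree (E : Finset G) : Finset (G → Bool) := {g | ∃ v ∈ V, ∀ i ∉ E, v i = bit (g i)}
  have hcover : (Finset.univ : Finset (G → Bool)) ⊆
      ({E | E.card ≤ k} : Finset (Finset G)).biUnion agree := by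
    intro g _
    obtain ⟨v, hv, hcard⟩ := h g
    refine Finset.mem_biUnion.2 ⟨({i | v i ≠ bit (g i)} : Finset G),
      (Finset.mem_filter_univ _).2 hcard, (Finset.mem_filter_univ _).2 ⟨v, hv, fun i hi => ?_⟩⟩
    simpa using hi
  have hweight {E : Finset G} (hE : E.card ≤ k) : (2 : ℝ) ^ E.card ≤ 8 ^ k * (1 / 4) ^ E.card :=
    calc (2 : ℝ) ^ E.card = 8 ^ E.card * (1 / 4) ^ E.card := by rw [← mul_pow]; norm_num
      _ ≤ 8 ^ k * (1 / 4) ^ E.card := by gcongr; norm_num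
  calc (2 : ℝ) ^ Fintype.card G = (Finset.univ : Finset (G → Bool)).card := by simp
    _ ≤ ∑ E : Finset G with E.card ≤ k, ((agree E).card : ℝ) := by
        exact_mod_cast (Finset.card_le_card hcover).trans Finset.card_biUnion_le
    _ ≤ ∑ E : Finset G with E.card ≤ k, 2 ^ Module.finrank ℝ V * (8 ^ k * (1 / 4) ^ E.card) := by
        refine Finset.sum_le_sum fun E hE => ?_
        calc ((agree E).card : ℝ) ≤ 2 ^ (E.card + Module.finrank ℝ V) := by
              exact_mod_cast card_setOf_eqOn_compl_le V E
          _ = 2 ^ Module.finrank ℝ V * 2 ^ E.card := by rw [pow_add, mul_comm]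
          _ ≤ _ := by gcongr; exact hweight (Finset.mem_filter.1 hE).2
    _ ≤ ∑ E : Finset G, 2 ^ Module.finrank ℝ V * (8 ^ k * (1 / 4) ^ E.card) :=
        Finset.sum_le_sum_of_subset_of_nonneg (Finset.subset_univ _) fun _ _ _ => by positivity
    _ = 2 ^ Module.finrank ℝ V * (8 ^ k * (5 / 4) ^ Fintype.card G) := by
        have hbinom := Fintype.sum_pow_mul_eq_add_pow G (1 / 4 : ℝ) 1
        simp only [one_pow, mul_one] at hbinom
        rw [← Finset.mul_sum, ← Finset.mul_sum, hbinom]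
        norm_num

lemma card_le_three_mul_finrank {V : Submodule ℝ (G → ℝ)}
    (h : ∀ g : G → Bool, ∃ v ∈ V, 9 * Finset.card {i | v i ≠ bit (g i)} ≤ Fintype.card G) :
    Fintype.card G ≤ 3 * Module.finrank ℝ V := by
  set N := Fintype.card G
  set D := Module.finrank ℝ V
  set k := N / 9
  have hcount : (2 : ℝ) ^ N ≤ 2 ^ D * (8 ^ k * (5 / 4) ^ N) :=
    two_pow_card_le_of_forall_exists_card_le fun g => by
      obtain ⟨v, hv, hcard⟩ := h g
      exact ⟨v, hv, by lia⟩
  have hpow : (2 : ℝ) ^ (3 * N) ≤ 2 ^ (3 * D + 2 * N) :=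
    calc (2 : ℝ) ^ (3 * N) = (2 ^ N) ^ 3 := by rw [← pow_mul, mul_comm]
      _ ≤ (2 ^ D * (8 ^ k * (5 / 4) ^ N)) ^ 3 := by gcongr
      _ = 2 ^ (3 * D) * (2 ^ (9 * k) * (125 / 64) ^ N) := by
          rw [mul_pow, mul_pow, pow_right_comm 8, pow_right_comm (5 / 4), ← pow_mul, mul_comm D,
            pow_mul 2 9]
          norm_num
      _ ≤ 2 ^ (3 * D) * (2 ^ N * 2 ^ N) := by
          gcongr
          · norm_num
          · lia
          · norm_num
      _ = 2 ^ (3 * D + 2 * N) := by rw [← pow_add, ← pow_add, two_mul]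
  have hexp := (pow_le_pow_iff_right₀ one_lt_two).1 hpow
  lia

end Counting

section PolynomialSpace

open scoped Pointwise

variable {κ : Type*}

lemma restrictTotalDegree_le_span_pow (D : ℕ) :
    restrictTotalDegree κ ℝ D ≤
      Submodule.span ℝ (Set.range fun o : Option κ => o.elim (1 : MvPolynomial κ ℝ) X) ^ D := by
  set M := Submodule.span ℝ (Set.range fun o : Option κ => o.elim (1 : MvPolynomial κ ℝ) X)
  have hone : 1 ≤ M := Submodule.one_le.2 (Submodule.subset_span ⟨none, rfl⟩)
  have hX (k : κ) : X k ∈ M := Submodule.subset_span ⟨some k, rfl⟩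
  have hmonomial (u : κ →₀ ℕ) (D : ℕ) (hu : u.degree ≤ D) : monomial u 1 ∈ M ^ D := by
    induction D generalizing u with
    | zero =>
      obtain rfl : u = 0 := (Finsupp.degree_eq_zero_iff u).1 (Nat.le_zero.1 hu)
      exact Submodule.one_le.1 le_rfl
    | succ D ih =>
      obtain rfl | hne := eq_or_ne u 0
      · exact Submodule.one_le.1 (one_le_pow₀ hone)
      · obtain ⟨k, hk⟩ := Finsupp.ne_iff.1 hne
        obtain ⟨v, rfl⟩ := exists_add_of_le
          (Finsupp.single_le_iff.2 (Nat.one_le_iff_ne_zero.2 hk))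
        rw [map_add, Finsupp.degree_single] at hu
        rw [pow_succ', ← one_mul (1 : ℝ), ← monomial_mul]
        exact Submodule.mul_mem_mul (hX k) (ih v (by lia))
  intro P hP
  rw [P.as_sum]
  refine Submodule.sum_mem _ fun u hu => ?_
  have := (M ^ D).smul_mem (P.coeff u) (hmonomial u D ?_)
  · simpa [smul_monomial] using this
  · exact (le_totalDegree hu).trans ((mem_restrictTotalDegree κ D P).1 hP)

lemma finrank_restrictTotalDegree_le [Fintype κ] (D : ℕ) :
    Module.finrank ℝ (restrictTotalDegree κ ℝ D) ≤ (Fintype.card κ + 1) ^ D := by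
  let S : Finset (MvPolynomial κ ℝ) := Finset.univ.image fun o : Option κ => o.elim 1 X
  have hspan : restrictTotalDegree κ ℝ D ≤ Submodule.span ℝ (S ^ D : Finset _) := by
    rw [Finset.coe_pow, ← Submodule.span_pow, Finset.coe_image, Finset.coe_univ, Set.image_univ]
    exact restrictTotalDegree_le_span_pow D
  calc _ ≤ Module.finrank ℝ (Submodule.span ℝ ((S ^ D : Finset _) : Set (MvPolynomial κ ℝ))) :=
        Submodule.finrank_mono hspan
    _ ≤ (S ^ D).card := finrank_span_finset_le_card _
    _ ≤ S.card ^ D := Finset.card_pow_le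
    _ ≤ (Fintype.card κ + 1) ^ D := by
        gcongr
        exact Finset.card_image_le.trans_eq (by rw [Finset.card_univ, Fintype.card_option])

end PolynomialSpace

section Shattering

variable {ι κ G : Type} {f : (ι → Bool) → Bool}

/-- Every Boolean labelling of the family of points `z` is computed by `f` after a substitution
whose coordinates are affine; this is the shattering of learning theory, with the hypothesis class
consisting of the affine substitution instances of `f`. -/
def AffinelyShatters (f : (ι → Bool) → Bool) (z : G → κ → Bool) : Prop :=
  ∀ g : G → Bool, ∃ X : (κ → Bool) → ι → Bool,
    (∀ j, HasRandomPoly (fun y => X y j) (fun _ => 0) 1) ∧ ∀ i, f (X (z i)) = g i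

lemma AffinelyShatters.card_le [Finite ι] [Fintype κ] [Fintype G] {z : G → κ → Bool}
    (hz : AffinelyShatters f z) {D : ℕ} (hf : HasRandomPoly f (fun _ => 1 / 9) D) :
    Fintype.card G ≤ 3 * (Fintype.card κ + 1) ^ D := by
  let evalAt : MvPolynomial κ ℝ →ₗ[ℝ] G → ℝ :=
    LinearMap.pi fun i => (aeval fun k => bit (z i k)).toLinearMap
  have hlabel (g : G → Bool) : ∃ v ∈ (restrictTotalDegree κ ℝ D).map evalAt,
      9 * Finset.card {i | v i ≠ bit (g i)} ≤ Fintype.card G := by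
    obtain ⟨X, hX, hXg⟩ := hz g
    obtain ⟨Ω, _, _, _, μ, _, P, hdeg, herr⟩ := hf.comp_affine hX
    obtain ⟨ω, hω⟩ := exists_card_filter_le (ε := 1 / 9) μ
      (fun i ω => evalBool (z i) (P ω) ≠ bit (g i)) fun i => by simpa only [hXg] using herr (z i)
    refine ⟨evalAt (P ω), Submodule.mem_map_of_mem ((mem_restrictTotalDegree κ D _).2 (hdeg ω)), ?_⟩
    have hω' : (Finset.card {i | evalBool (z i) (P ω) ≠ bit (g i)} : ℝ) ≤
        1 / 9 * Fintype.card G := by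
      convert hω
    have hmul : 9 * (Finset.card {i | evalBool (z i) (P ω) ≠ bit (g i)} : ℝ) ≤ Fintype.card G := by
      linarith
    exact_mod_cast hmul
  calc Fintype.card G ≤ 3 * Module.finrank ℝ ((restrictTotalDegree κ ℝ D).map evalAt) :=
        card_le_three_mul_finrank hlabel
    _ ≤ 3 * Module.finrank ℝ (restrictTotalDegree κ ℝ D) := by
        gcongr
        exact Submodule.finrank_map_le _ _
    _ ≤ 3 * (Fintype.card κ + 1) ^ D := by
        gcongr
        exact finrank_restrictTotalDegree_le D

lemma exists_affinelyShatters_of_trulyVariate [Fintype ι] [Fintype κ] [Nonempty κ]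
    (hf : TrulyVariate f) (hκ : 2 * (2 * blockSensitivity f ^ 2 + 1) ^ 2 ≤ Fintype.card κ) :
    ∃ (S : Finset ι) (z : S → κ → Bool),
      Fintype.card ι ≤ 2 * Fintype.card κ * S.card ∧ AffinelyShatters f z := by
  choose W a c hiW hWcard hfW using exists_forall_eq_xor_of_trulyVariate hf
  obtain ⟨ρ, k₀, S, hcard, hS⟩ := exists_injOn_of_card_le (W := fun i => insert i (W i))
    (fun i => (Finset.card_insert_le _ _).trans (Nat.succ_le_succ (hWcard i))) hκ
  let z (i : S) (k : κ) : Bool := decide (∃ j ∈ W i, ρ j = k ∧ a i j = true)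
  have hz {i : S} {j : ι} (hj : j ∈ W i) : z i (ρ j) = a i j := by
    refine Bool.eq_iff_iff.2 ⟨fun hzj => ?_, fun haj => decide_eq_true ⟨j, hj, rfl, haj⟩⟩
    obtain ⟨j', hj', hρ, haj'⟩ := of_decide_eq_true hzj
    rwa [← (hS i i.2).2 (Finset.mem_insert_of_mem hj') (Finset.mem_insert_of_mem hj) hρ]
  refine ⟨S, z, hcard, fun g => ?_⟩
  let label (j : ι) : Bool := if hj : j ∈ S then g ⟨j, hj⟩ else false
  refine ⟨fun y j => if ρ j = k₀ then c j ^^ label j else y (ρ j), fun j => ?_, fun ⟨i, hi⟩ => ?_⟩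
  · by_cases hj : ρ j = k₀
    · simpa only [hj, if_true] using HasRandomPoly.const (c j ^^ label j) 1
    · simpa only [hj, if_false] using HasRandomPoly.coord (ρ j)
  · obtain ⟨hρi, hinj⟩ := hS i hi
    have hρj {j : ι} (hj : j ∈ W i) : ρ j ≠ k₀ := fun h => hiW i <|
      hinj (Finset.mem_insert_of_mem hj) (Finset.mem_insert_self i _) (h.trans hρi.symm) ▸ hj
    rw [hfW i _ fun j hj => (if_neg (hρj hj)).trans (hz (i := ⟨i, hi⟩) hj)]
    simp [hρi, label, hi]

lemma card_le_of_trulyVariate [Fintype ι] (hf : TrulyVariate f) :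
    Fintype.card ι ≤ (2 * (blockSensitivity f + 1)) ^ (7 * (1728 * pdeg (1 / 3) f + 1)) := by
  have hpoly : HasRandomPoly f (fun _ => 1 / 9) (1728 * pdeg (1 / 3) f) :=
    ((hasRandomPoly_pdeg f (by norm_num)).amplify (r := 4) (by norm_num)).mono
      (fun _ => by norm_num) (by lia)
  generalize 1728 * pdeg (1 / 3) f = D at hpoly ⊢
  set b := blockSensitivity f
  set m := 2 * (2 * b ^ 2 + 1) ^ 2 with hm
  have : NeZero m := ⟨by positivity⟩
  obtain ⟨S, z, hcard, hz⟩ := exists_affinelyShatters_of_trulyVariate (κ := Fin m) hf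
    (by simp [m, b])
  have hS := hz.card_le hpoly
  rw [Fintype.card_coe, Fintype.card_fin] at hS
  rw [Fintype.card_fin] at hcard
  have hm_le : m + 1 ≤ 8 * (b + 1) ^ 4 := by
    rw [hm]; ring_nf; lia
  calc Fintype.card ι ≤ 2 * m * S.card := hcard
    _ ≤ 2 * (8 * (b + 1) ^ 4) * (3 * (8 * (b + 1) ^ 4) ^ D) := by
        gcongr
        · lia
        · exact hS.trans (by gcongr)
    _ = 48 * (b + 1) ^ 4 * (8 * (b + 1) ^ 4) ^ D := by ring
    _ ≤ (2 * (b + 1)) ^ 7 * ((2 * (b + 1)) ^ 7) ^ D := by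
        rw [mul_pow 2]
        gcongr <;> norm_num
    _ = (2 * (b + 1)) ^ (7 * (D + 1)) := by rw [← pow_succ', ← pow_mul]

end Shattering

section Asymptotics

open Filter Topology

lemma logb_natCast_nonneg (n : ℕ) : 0 ≤ Real.logb 2 n :=
  div_nonneg (Real.log_natCast_nonneg n) (Real.log_nonneg one_le_two)

lemma clog_two_le_logb_add_one (n : ℕ) : (Nat.clog 2 n : ℝ) ≤ Real.logb 2 n + 1 := by
  rw [← Real.natCeil_logb_natCast 2 n]
  exact (Nat.ceil_lt_add_one (logb_natCast_nonneg n)).le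

/-- The logarithmic size `1 + log₂ (b + 1)`, shifted so that it is at least `1` for every `b`. -/
noncomputable def logSize (b : ℕ) : ℝ := 1 + Real.logb 2 (b + 1 : ℕ)

lemma one_le_logSize (b : ℕ) : 1 ≤ logSize b := le_add_of_nonneg_right (logb_natCast_nonneg _)

lemma logSize_eq_logb (b : ℕ) : logSize b = Real.logb 2 (2 * (b + 1) : ℕ) := by
  rw [logSize, Nat.cast_mul, Nat.cast_two, Real.logb_mul two_ne_zero (by positivity),
    Real.logb_self_eq_one one_lt_two]

lemma monotone_logSize : Monotone logSize := fun b b' h => by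
  unfold logSize
  gcongr
  · norm_num

lemma clog_two_le_logSize (b : ℕ) : (Nat.clog 2 b : ℝ) ≤ logSize b := by
  calc (Nat.clog 2 b : ℝ) ≤ Nat.clog 2 (b + 1) :=
        mod_cast Nat.clog_mono_right 2 (Nat.le_add_right b 1)
    _ ≤ logSize b := (clog_two_le_logb_add_one _).trans_eq (add_comm _ _)

lemma clog_clog_add_eight_pow_three_le {δ : ℝ} (hδ : 0 < δ) :
    ∃ A > 0, ∀ b : ℕ, ((Nat.clog 2 (Nat.clog 2 b + 1) : ℝ) + 8) ^ 3 ≤ A * logSize b ^ δ := by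
  have hlog2 := Real.log_pos one_lt_two
  refine ⟨(10 + 1 / (δ / 3 * Real.log 2)) ^ 3, by positivity, fun b => ?_⟩
  set L := logSize b
  have hL : 1 ≤ L := one_le_logSize b
  have hclog : (Nat.clog 2 (Nat.clog 2 b + 1) : ℝ) ≤ Real.logb 2 L + 2 :=
    calc (Nat.clog 2 (Nat.clog 2 b + 1) : ℝ) ≤ Real.logb 2 (Nat.clog 2 b + 1 : ℕ) + 1 :=
          clog_two_le_logb_add_one _
      _ ≤ Real.logb 2 (L * 2) + 1 := by
          gcongr
          · norm_num
          · push_cast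
            linarith [clog_two_le_logSize b]
      _ = Real.logb 2 L + 2 := by
          rw [Real.logb_mul (by positivity) two_ne_zero, Real.logb_self_eq_one one_lt_two]
          ring
  have hlogb : Real.logb 2 L ≤ 1 / (δ / 3 * Real.log 2) * L ^ (δ / 3) := by
    rw [Real.logb, div_le_iff₀ hlog2]
    refine (Real.log_le_rpow_div (by positivity) (by positivity : 0 < δ / 3)).trans_eq ?_
    field_simp
  have hone : 1 ≤ L ^ (δ / 3) := Real.one_le_rpow hL (by positivity)
  calc _ ≤ ((10 + 1 / (δ / 3 * Real.log 2)) * L ^ (δ / 3)) ^ 3 := by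
        gcongr
        linarith
    _ = _ := by
        rw [mul_pow, ← Real.rpow_mul_natCast (by positivity)]
        congr 2
        push_cast
        ring

lemma exists_logSize_rpow_le_pdeg_or {s : ℝ} (hs : 0 ≤ s)
    (hOR : ∃ N : ℕ, ∀ n : ℕ, N ≤ n → Real.logb 2 n ^ s ≤ (pdeg (1 / 3) (ORf n) : ℝ)) :
    ∃ K > 0, ∀ b : ℕ, logSize b ^ s ≤ K * (pdeg (1 / 3) (ORf b) + 1) := by
  obtain ⟨N, hN⟩ := hOR
  have hL (b : ℕ) : 0 ≤ logSize b := zero_le_one.trans (one_le_logSize b)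
  have hpos : 0 ≤ logSize (max N 2) ^ s := Real.rpow_nonneg (hL _) s
  refine ⟨3 ^ s + logSize (max N 2) ^ s, by positivity, fun b => ?_⟩
  rw [add_mul]
  obtain hb | hb := le_total (max N 2) b
  · obtain ⟨hNb, h2b⟩ := max_le_iff.1 hb
    have hlog : logSize b ≤ 3 * Real.logb 2 b := by
      have hcube : 2 * (b + 1) ≤ b ^ 3 :=
        calc 2 * (b + 1) ≤ 2 * 2 * b := by lia
          _ ≤ b * b * b := by gcongr
          _ = b ^ 3 := by ring
      calc logSize b ≤ Real.logb 2 (b ^ 3 : ℕ) := by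
            rw [logSize_eq_logb]
            gcongr
            norm_num
        _ = 3 * Real.logb 2 b := by rw [Nat.cast_pow, Real.logb_pow, Nat.cast_ofNat]
    calc logSize b ^ s ≤ (3 * Real.logb 2 b) ^ s := by gcongr; exact hL b
      _ = 3 ^ s * Real.logb 2 b ^ s := Real.mul_rpow (by norm_num) (logb_natCast_nonneg b)
      _ ≤ 3 ^ s * (pdeg (1 / 3) (ORf b) + 1) := by
          gcongr
          exact (hN b hNb).trans (le_add_of_nonneg_right zero_le_one)
      _ ≤ _ := le_add_of_nonneg_right (by positivity)
  · calc logSize b ^ s ≤ logSize (max N 2) ^ s := by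
          gcongr
          · exact hL b
          · exact monotone_logSize hb
      _ ≤ logSize (max N 2) ^ s * (pdeg (1 / 3) (ORf b) + 1) :=
          le_mul_of_one_le_right hpos (le_add_of_nonneg_left (Nat.cast_nonneg _))
      _ ≤ _ := le_add_of_nonneg_left (by positivity)

lemma exists_logSize_blockSensitivity_rpow_le_pdeg {s t : ℝ} (hs : 0 ≤ s) (hst : s < t)
    (hOR : ∃ N : ℕ, ∀ n : ℕ, N ≤ n → Real.logb 2 n ^ t ≤ (pdeg (1 / 3) (ORf n) : ℝ)) :
    ∃ K > 0, ∀ {ι : Type} [Fintype ι] (f : (ι → Bool) → Bool),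
      logSize (blockSensitivity f) ^ s ≤ K * (pdeg (1 / 3) f + 1) := by
  obtain ⟨K, hK, hKor⟩ := exists_logSize_rpow_le_pdeg_or (hs.trans hst.le) hOR
  obtain ⟨A, hA, hAlog⟩ := clog_clog_add_eight_pow_three_le (sub_pos.2 hst)
  refine ⟨K * (6912 * A + 1), by positivity, fun f => ?_⟩
  set b := blockSensitivity f
  have hL := one_le_logSize b
  have hLδ : 1 ≤ logSize b ^ (t - s) := Real.one_le_rpow hL (sub_pos.2 hst).le
  have hor : (pdeg (1 / 3) (ORf b) : ℝ) ≤ 6912 * (A * logSize b ^ (t - s)) * pdeg (1 / 3) f :=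
    calc (pdeg (1 / 3) (ORf b) : ℝ)
        ≤ 6912 * ((Nat.clog 2 (Nat.clog 2 b + 1) : ℝ) + 8) ^ 3 * pdeg (1 / 3) f :=
          mod_cast pdeg_or_blockSensitivity_le f
      _ ≤ _ := by gcongr; exact hAlog b
  refine le_of_mul_le_mul_right ?_ (zero_lt_one.trans_le hLδ)
  calc logSize b ^ s * logSize b ^ (t - s) = logSize b ^ t := by
        rw [← Real.rpow_add (by positivity), add_sub_cancel]
    _ ≤ K * (pdeg (1 / 3) (ORf b) + 1) := hKor b
    _ ≤ K * (6912 * (A * logSize b ^ (t - s)) * pdeg (1 / 3) f + logSize b ^ (t - s)) := by gcongr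
    _ ≤ K * (6912 * A + 1) * (pdeg (1 / 3) f + 1) * logSize b ^ (t - s) := by
        have : 0 ≤ K * logSize b ^ (t - s) * (pdeg (1 / 3) f + 6912 * A) := by positivity
        linarith

lemma rpow_div_add_one_le {x y z A K s : ℝ} (hx : 0 ≤ x) (hy : 0 < y) (hz : 0 ≤ z) (hA : 0 ≤ A)
    (hK : 0 ≤ K) (hs : 0 ≤ s) (hxyz : x ≤ A * y * z) (hzy : z ^ s ≤ K * y) :
    x ^ (s / (s + 1)) ≤ (A ^ s * K) ^ (1 / (s + 1)) * y := by
  have hpow : x ^ s ≤ A ^ s * K * y ^ (s + 1) :=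
    calc x ^ s ≤ (A * y * z) ^ s := by gcongr
      _ = A ^ s * y ^ s * z ^ s := by
          rw [Real.mul_rpow (by positivity) hz, Real.mul_rpow hA hy.le]
      _ ≤ A ^ s * y ^ s * (K * y) := by gcongr
      _ = A ^ s * K * y ^ (s + 1) := by rw [Real.rpow_add_one hy.ne']; ring
  calc x ^ (s / (s + 1)) = (x ^ s) ^ (1 / (s + 1)) := by rw [← Real.rpow_mul hx, mul_one_div]
    _ ≤ (A ^ s * K * y ^ (s + 1)) ^ (1 / (s + 1)) := by gcongr
    _ = (A ^ s * K) ^ (1 / (s + 1)) * y := by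
        rw [Real.mul_rpow (by positivity) (by positivity), ← Real.rpow_mul hy.le,
          mul_one_div_cancel (by positivity), Real.rpow_one]

lemma logb_card_le_of_trulyVariate {ι : Type} [Fintype ι] {f : (ι → Bool) → Bool}
    (hf : TrulyVariate f) :
    Real.logb 2 (Fintype.card ι) ≤
      12096 * (pdeg (1 / 3) f + 1) * logSize (blockSensitivity f) := by
  obtain hι | hι := (Fintype.card ι).eq_zero_or_pos
  · have := one_le_logSize (blockSensitivity f)
    rw [hι, Nat.cast_zero, Real.logb_zero]
    positivity
  · calc Real.logb 2 (Fintype.card ι)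
        ≤ Real.logb 2
            ((2 * (blockSensitivity f + 1)) ^ (7 * (1728 * pdeg (1 / 3) f + 1)) : ℕ) := by
          gcongr
          · norm_num
          · exact card_le_of_trulyVariate hf
      _ = 7 * (1728 * pdeg (1 / 3) f + 1) * logSize (blockSensitivity f) := by
          rw [Nat.cast_pow, Real.logb_pow, ← logSize_eq_logb]
          push_cast
          rfl
      _ ≤ _ := by
          refine mul_le_mul_of_nonneg_right ?_ (zero_le_one.trans (one_le_logSize _))
          linarith

lemma exists_logb_card_rpow_le_pdeg {s t : ℝ} (hs : 0 ≤ s) (hst : s < t)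
    (hOR : ∃ N : ℕ, ∀ n : ℕ, N ≤ n → Real.logb 2 n ^ t ≤ (pdeg (1 / 3) (ORf n) : ℝ)) :
    ∃ K > 0, ∀ {ι : Type} [Fintype ι] {f : (ι → Bool) → Bool}, TrulyVariate f →
      Real.logb 2 (Fintype.card ι) ^ (s / (s + 1)) ≤ K * (pdeg (1 / 3) f + 1) := by
  obtain ⟨K, hK, hbs⟩ := exists_logSize_blockSensitivity_rpow_le_pdeg hs hst hOR
  refine ⟨(12096 ^ s * K) ^ (1 / (s + 1)), by positivity, fun {ι _ f} hf => ?_⟩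
  exact rpow_div_add_one_le (logb_natCast_nonneg _) (by positivity)
    (zero_le_one.trans (one_le_logSize _)) (by norm_num) hK.le hs
    (logb_card_le_of_trulyVariate hf) (hbs f)

lemma eventually_mul_logb_rpow_add_one_le {e γ : ℝ} (he : e < γ) (hγ : 0 < γ) (K : ℝ) :
    ∀ᶠ n : ℕ in atTop, K * (Real.logb 2 n ^ e + 1) ≤ Real.logb 2 n ^ γ := by
  have hx : ∀ᶠ x : ℝ in atTop, K * (x ^ e + 1) ≤ x ^ γ := by
    have hratio : Tendsto (fun x : ℝ => K * (x ^ (-(γ - e)) + x ^ (-γ))) atTop (𝓝 0) := by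
      simpa using ((tendsto_rpow_neg_atTop (sub_pos.2 he)).add
        (tendsto_rpow_neg_atTop hγ)).const_mul K
    filter_upwards [hratio.eventually_le_const one_pos, eventually_gt_atTop 0] with x hx hx0
    calc K * (x ^ e + 1) = K * (x ^ (-(γ - e)) + x ^ (-γ)) * x ^ γ := by
          rw [mul_assoc, add_mul, ← Real.rpow_add hx0, ← Real.rpow_add hx0, neg_sub,
            sub_add_cancel, neg_add_cancel, Real.rpow_zero]
      _ ≤ x ^ γ := mul_le_of_le_one_left (by positivity) hx
  exact ((Real.tendsto_logb_atTop one_lt_two).comp tendsto_natCast_atTop_atTop).eventually hx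

lemma exists_lt_div_add_one {c e : ℝ} (hc : 0 < c) (he : e < c / (c + 1)) :
    ∃ s, 0 < s ∧ s < c ∧ e < s / (s + 1) := by
  have hcont : ContinuousAt (fun s : ℝ => s / (s + 1)) c := by fun_prop (disch := positivity)
  have hnear : ∀ᶠ s in 𝓝[<] c, e < s / (s + 1) :=
    (hcont.eventually_const_lt he).filter_mono nhdsWithin_le_nhds
  obtain ⟨s, hes, hs, hsc⟩ := (hnear.and (Ioo_mem_nhdsLT hc)).exists
  exact ⟨s, hs, hsc, hes⟩

end Asymptotics

end ProbDegree

theorem lower_bound_truly_nvariate (c : ℝ) (hc : 0 < c)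
    (hOR : ∀ ε : ℝ, 0 < ε → ∃ N : ℕ, ∀ n : ℕ, N ≤ n →
      (Real.logb 2 n) ^ (c - ε) ≤ (pdeg (1/3) (ORf n) : ℝ)) :
    ∀ ε : ℝ, 0 < ε → ∃ N' : ℕ, ∀ n : ℕ, N' ≤ n →
      ∀ f : (Fin n → Bool) → Bool, TrulyVariate f →
        (Real.logb 2 n) ^ (c / (c + 1) - ε) ≤ (pdeg (1/3) f : ℝ) := by
  intro ε hε
  obtain ⟨s, hs, hsc, hes⟩ := ProbDegree.exists_lt_div_add_one hc (sub_lt_self (c / (c + 1)) hε)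
  obtain ⟨t, hst, htc⟩ := exists_between hsc
  have hORt := hOR (c - t) (sub_pos.2 htc)
  rw [sub_sub_cancel] at hORt
  obtain ⟨K, hK, hupper⟩ := ProbDegree.exists_logb_card_rpow_le_pdeg hs.le hst hORt
  obtain ⟨N, hlower⟩ := Filter.eventually_atTop.1 <|
    ProbDegree.eventually_mul_logb_rpow_add_one_le hes (by positivity) K
  refine ⟨N, fun n hn f hf => ?_⟩
  have hf_upper := hupper hf
  rw [Fintype.card_fin] at hf_upper
  exact le_of_add_le_add_right (le_of_mul_le_mul_left ((hlower n hn).trans hf_upper) hK)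
end

section
/- Fix c > 0. Suppose that for every ε > 0 there exists N such that for all n ≥ N, pdeg(OR_n) ≤ (log₂ n)^{c+ε}. Then for every ε > 0 there exists N′ such that for all n ≥ N′ there exists a truly n-variate Boolean function f : {0,1}^n → {0,1} with pdeg(f) ≤ (log₂ n)^{c/(c+1)+ε}. -/
open scoped Classical

/-!
Split the input into data bits and address bits. The multiplexer, which returns the data bit at the
given address, is truly variate for every choice of the addresses. Take them to be one-hot encodings
of words of `t` letters from an alphabet of size `s`, blanks allowed, so that up to `(s + 1) ^ t`
cells are available. An address fails to be one-hot exactly when some block marks two letters, which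
is an OR of fewer than `t * s ^ 2` conjunctions of two bits; on one-hot addresses, comparison with a
fixed word is a product of `t` affine polynomials. Therefore
`pdeg (multiplexer) ≤ 2 * pdeg (OR of t * s ^ 2 bits) + t + 1`. Writing `log₂ n = x ^ (c + 1)`, the
choice `s = 2 ^ ⌈x⌉`, `t = ⌈x ^ c⌉` makes room for `n` bits and balances the two terms at
`x ^ (c + o(1)) = (log₂ n) ^ (c / (c + 1) + o(1))`.
-/

open MvPolynomial

section Polynomials

theorem totalDegree_aeval_le {R σ τ : Type*} [CommSemiring R] {g : σ → MvPolynomial τ R} {k : ℕ}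
    (hg : ∀ i, (g i).totalDegree ≤ k) (P : MvPolynomial σ R) :
    (aeval g P).totalDegree ≤ k * P.totalDegree := by
  rw [aeval_def, eval₂_eq]
  refine totalDegree_finsetSum_le fun d hd => ?_
  calc (algebraMap R (MvPolynomial τ R) (P.coeff d) * ∏ i ∈ d.support, g i ^ d i).totalDegree
    _ ≤ (∏ i ∈ d.support, g i ^ d i).totalDegree := by
        simpa [algebraMap_eq] using totalDegree_mul (C (P.coeff d)) (∏ i ∈ d.support, g i ^ d i)
    _ ≤ ∑ i ∈ d.support, (g i ^ d i).totalDegree := totalDegree_finsetProd _ _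
    _ ≤ ∑ i ∈ d.support, d i * k := Finset.sum_le_sum fun i _ =>
        (totalDegree_pow _ _).trans (Nat.mul_le_mul_left _ (hg i))
    _ = k * ∑ i ∈ d.support, d i := by rw [← Finset.sum_mul, mul_comm]
    _ ≤ k * P.totalDegree := Nat.mul_le_mul_left _ (le_totalDegree hd)

theorem evalBool_X {ι : Type} (a : ι → Bool) (i : ι) :
    evalBool a (X i) = if a i then 1 else 0 :=
  eval_X i

theorem evalBool_rename {σ ι : Type} (φ : σ → ι) (a : ι → Bool) (P : MvPolynomial σ ℝ) :
    evalBool a (rename φ P) = evalBool (a ∘ φ) P :=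
  eval_rename φ _ P

/-- The real polynomial `P` represents the Boolean function `f`: they agree on the cube. -/
def Represents {ι : Type} (P : MvPolynomial ι ℝ) (f : (ι → Bool) → Bool) : Prop :=
  ∀ a, evalBool a P = if f a then 1 else 0

theorem evalBool_aeval {σ ι : Type} {Q : σ → MvPolynomial ι ℝ} {b : σ → (ι → Bool) → Bool}
    (hQ : ∀ i, Represents (Q i) (b i)) (a : ι → Bool) (P : MvPolynomial σ ℝ) :
    evalBool a (aeval Q P) = evalBool (fun i => b i a) P := by
  have hQa : (fun i => evalBool a (Q i)) = fun i => if b i a then 1 else 0 :=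
    funext fun i => hQ i a
  simp only [evalBool, ← hQa]
  exact eval₂Hom_bind₁ _ _ Q P

theorem exists_represents {ι : Type} [Finite ι] (f : (ι → Bool) → Bool) :
    ∃ P, Represents P f := by
  have := Fintype.ofFinite ι
  refine ⟨∑ b with f b, ∏ i, if b i then X i else 1 - X i, fun a => ?_⟩
  have indicator (b : ι → Bool) :
      evalBool a (∏ i, if b i then X i else 1 - X i) = if a = b then 1 else 0 := by
    have factor (i : ι) :
        evalBool a (if b i then X i else 1 - X i) = if a i = b i then 1 else 0 := by
      cases ha : a i <;> cases hb : b i <;> simp [evalBool, ha]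
    calc evalBool a (∏ i, if b i then X i else 1 - X i)
      _ = ∏ i, evalBool a (if b i then X i else 1 - X i) := map_prod _ _ _
      _ = if a = b then 1 else 0 := by
          simp only [factor, Finset.prod_ite_zero, Finset.prod_const_one, Finset.mem_univ,
            true_imp_iff, funext_iff]
  calc evalBool a (∑ b with f b, ∏ i, if b i then X i else 1 - X i)
    _ = ∑ b with f b, evalBool a (∏ i, if b i then X i else 1 - X i) := map_sum _ _ _
    _ = if f a then 1 else 0 := by simp [indicator]

end Polynomials

section ProbabilisticPolynomials

variable {ι σ : Type} {f : (ι → Bool) → Bool} {g : (σ → Bool) → Bool} {ε : ℝ} {d d' k : ℕ}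

theorem Represents.hasProbPoly {P : MvPolynomial ι ℝ} (hP : Represents P f) (hε : 0 ≤ ε) :
    HasProbPoly f ε P.totalDegree :=
  ⟨1, fun _ => 1, fun _ => P, by simp, by simp, fun _ => le_rfl, fun a => by simpa [hP a] using hε⟩

theorem hasProbPoly_pdeg [Finite ι] (hε : 0 ≤ ε) (f : (ι → Bool) → Bool) :
    HasProbPoly f ε (pdeg ε f) := by
  obtain ⟨P, hP⟩ := exists_represents f
  exact Nat.sInf_mem (s := {d | HasProbPoly f ε d}) ⟨_, hP.hasProbPoly hε⟩

theorem HasProbPoly.pdeg_le (hf : HasProbPoly f ε d) : pdeg ε f ≤ d :=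
  Nat.sInf_le hf

theorem HasProbPoly.transform (hg : HasProbPoly g ε d) (b : (ι → Bool) → σ → Bool)
    (T : MvPolynomial σ ℝ → MvPolynomial ι ℝ)
    (hdeg : ∀ P, P.totalDegree ≤ d → (T P).totalDegree ≤ d')
    (heval : ∀ P a, evalBool (b a) P = (if g (b a) then 1 else 0) →
      evalBool a (T P) = if f a then 1 else 0) :
    HasProbPoly f ε d' := by
  obtain ⟨r, w, P, hw, hsum, hP, herr⟩ := hg
  refine ⟨r, w, fun i => T (P i), hw, hsum, fun i => hdeg _ (hP i), fun a => ?_⟩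
  refine (Finset.sum_le_sum_of_subset_of_nonneg ?_ fun i _ _ => hw i).trans (herr (b a))
  exact Finset.monotone_filter_right _ fun i _ => mt (heval (P i) a)

theorem HasProbPoly.comp (hg : HasProbPoly g ε d) {Q : σ → MvPolynomial ι ℝ}
    {b : σ → (ι → Bool) → Bool} (hdeg : ∀ i, (Q i).totalDegree ≤ k)
    (hQ : ∀ i, Represents (Q i) (b i)) :
    HasProbPoly (fun a => g fun i => b i a) ε (k * d) :=
  hg.transform (fun a i => b i a) (aeval Q)
    (fun P hP => (totalDegree_aeval_le hdeg P).trans (Nat.mul_le_mul_left k hP))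
    fun P a h => (evalBool_aeval hQ a P).trans h

theorem HasProbPoly.precomp (hg : HasProbPoly g ε d) (φ : σ → ι) :
    HasProbPoly (fun a => g (a ∘ φ)) ε d := by
  simpa only [one_mul, Function.comp_def] using
    hg.comp (Q := fun i => X (φ i)) (b := fun i a => a (φ i))
      (fun i => (totalDegree_X (φ i)).le) fun i a => evalBool_X a (φ i)

-- `(1 - P) * S` is correct wherever `P` is: the factor `1 - P` kills `S` where the guard fires.
theorem HasProbPoly.of_guard {g : (ι → Bool) → Bool} (hg : HasProbPoly g ε d)
    {S : MvPolynomial ι ℝ} (hdeg : S.totalDegree ≤ k) (hfg : ∀ a, g a = true → f a = false)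
    (hS : ∀ a, g a = false → evalBool a S = if f a then 1 else 0) :
    HasProbPoly f ε (d + k) := by
  refine hg.transform id (fun P => (1 - P) * S) (fun P hP => ?_) fun P a hPa => ?_
  · have h1P : (1 - P).totalDegree ≤ d := (totalDegree_sub _ _).trans (by simpa using hP)
    exact (totalDegree_mul _ _).trans (add_le_add h1P hdeg)
  · have hmul : evalBool a ((1 - P) * S) = (1 - evalBool a P) * evalBool a S := by simp [evalBool]
    rw [hmul, show evalBool a P = _ from hPa]
    cases hga : g a
    · simp [hga, hS a hga]
    · simp [hga, hfg a hga]

theorem HasProbPoly.of_exists {ρ : Type} [Fintype ρ] {M : ℕ} (hM : Fintype.card ρ ≤ M)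
    (hOR : HasProbPoly (ORf M) ε d) {Q : ρ → MvPolynomial ι ℝ} {b : ρ → (ι → Bool) → Bool}
    (hdeg : ∀ r, (Q r).totalDegree ≤ k) (hQ : ∀ r, Represents (Q r) (b r))
    (hf : ∀ a, f a = true ↔ ∃ r, b r a = true) :
    HasProbPoly f ε (k * d) := by
  let e : Fin M ≃ ρ ⊕ Fin (M - Fintype.card ρ) := Fintype.equivOfCardEq (by simp [hM])
  let paddedQ : ρ ⊕ Fin (M - Fintype.card ρ) → MvPolynomial ι ℝ := Sum.elim Q fun _ => 0
  let paddedBit : ρ ⊕ Fin (M - Fintype.card ρ) → (ι → Bool) → Bool :=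
    Sum.elim b fun _ _ => false
  have paddedQ_degree (r) : (paddedQ r).totalDegree ≤ k := by
    rcases r with r | _
    · exact hdeg r
    · simp [paddedQ]
  have paddedQ_represents (r) : Represents (paddedQ r) (paddedBit r) := by
    rcases r with r | _
    · exact hQ r
    · simp [Represents, paddedQ, paddedBit, evalBool]
  have hf_eq : f = fun a => ORf M fun i => paddedBit (e i) a := by
    funext a
    rw [Bool.eq_iff_iff, hf a, ORf, decide_eq_true_iff,
      e.exists_congr_left (p := fun i => paddedBit (e i) a = true)]
    simp [paddedBit]
  rw [hf_eq]
  exact hOR.comp (fun i => paddedQ_degree (e i)) fun i => paddedQ_represents (e i)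

end ProbabilisticPolynomials

section Multiplexer

variable {μ α : Type}

/-- The multiplexer (address function) with data bits indexed by `μ` and address bits by `α`: it
outputs the data bit of the cell whose address `code m` is given, and `false` when the address bits
are not a code word. -/
noncomputable def multiplexer (code : μ → α → Bool) (a : μ ⊕ α → Bool) : Bool :=
  decide (∃ m, a (.inl m) = true ∧ a ∘ .inr = code m)

theorem multiplexer_eq_true_iff {code : μ → α → Bool} {a : μ ⊕ α → Bool} :
    multiplexer code a = true ↔ ∃ m, a (.inl m) = true ∧ a ∘ .inr = code m :=
  decide_eq_true_iff

theorem TrulyVariate.precomp_equiv {σ ι : Type} {f : (σ → Bool) → Bool} (hf : TrulyVariate f)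
    (e : σ ≃ ι) : TrulyVariate fun a : ι → Bool => f (a ∘ e) := by
  intro i
  obtain ⟨a, ha⟩ := hf (e.symm i)
  refine ⟨a ∘ e.symm, ?_⟩
  have hupdate : Function.update (a ∘ e.symm) i (!(a ∘ e.symm) i) ∘ e
      = Function.update a (e.symm i) (!a (e.symm i)) := by
    rw [Function.update_comp_equiv, Function.comp_assoc, e.symm_comp_self]
    rfl
  simpa only [hupdate, Function.comp_assoc, e.symm_comp_self, Function.comp_id] using ha

-- Every coordinate is sensitive at a point addressing `m` whose only nonzero data bit is `m`.
theorem trulyVariate_multiplexer [Nonempty μ] (code : μ → α → Bool) :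
    TrulyVariate (multiplexer code) := by
  let point (m : μ) : μ ⊕ α → Bool := Sum.elim (fun m' => decide (m' = m)) (code m)
  have hpoint (m : μ) : multiplexer code (point m) = true :=
    multiplexer_eq_true_iff.2 ⟨m, by simp [point], rfl⟩
  rintro (m | p)
  · refine ⟨point m, ?_⟩
    rw [hpoint, ne_eq, multiplexer_eq_true_iff]
    rintro ⟨m', hm', -⟩
    obtain rfl | hne := eq_or_ne m' m
    · simp [point] at hm'
    · simp [point, hne] at hm'
  · obtain ⟨m⟩ := ‹Nonempty μ›
    refine ⟨point m, ?_⟩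
    rw [hpoint, ne_eq, multiplexer_eq_true_iff]
    rintro ⟨m', hm', hcode⟩
    obtain rfl : m' = m := by simpa [point] using hm'
    have hflip : (!point m' (.inr p)) = code m' p := by
      simpa only [Function.comp_apply, Function.update_self] using congrFun hcode p
    exact Bool.not_ne_self (code m' p) hflip

theorem hasProbPoly_multiplexer [Finite μ] {code : μ → α → Bool} {g : (α → Bool) → Bool} {ε : ℝ}
    {d k : ℕ} {q : μ → MvPolynomial α ℝ} (hg : HasProbPoly g ε d)
    (hcode : Function.Injective code) (hg_code : ∀ m, g (code m) = false)
    (hdeg : ∀ m, (q m).totalDegree ≤ k)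
    (hq : ∀ m x, g x = false → evalBool x (q m) = if x = code m then 1 else 0) :
    HasProbPoly (multiplexer code) ε (d + (1 + k)) := by
  have := Fintype.ofFinite μ
  refine (hg.precomp Sum.inr).of_guard (S := ∑ m, X (.inl m) * rename .inr (q m)) ?_ ?_ ?_
  · refine totalDegree_finsetSum_le fun m _ => (totalDegree_mul _ _).trans ?_
    exact add_le_add (totalDegree_X _).le ((totalDegree_rename_le _ _).trans (hdeg m))
  · intro a ha
    refine Bool.eq_false_of_not_eq_true fun htrue => ?_
    obtain ⟨m, -, hm⟩ := multiplexer_eq_true_iff.1 htrue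
    exact Bool.false_ne_true ((hg_code m).symm.trans (hm ▸ ha))
  · intro a ha
    calc evalBool a (∑ m, X (.inl m) * rename .inr (q m))
      _ = ∑ m, evalBool a (X (.inl m)) * evalBool a (rename .inr (q m)) := by simp [evalBool]
      _ = ∑ m, if a (.inl m) = true ∧ a ∘ .inr = code m then 1 else 0 := by
          simp only [evalBool_X, evalBool_rename, hq _ _ ha, ite_and, ite_mul, one_mul, zero_mul]
      _ = if ∃ m, a (.inl m) = true ∧ a ∘ .inr = code m then 1 else 0 := by
          convert Fintype.sum_ite_eq_ite_exists (fun m => a (.inl m) = true ∧ a ∘ .inr = code m)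
            (fun m m' hm hm' => hcode (hm.2.symm.trans hm'.2)) (1 : ℝ)
      _ = if multiplexer code a then 1 else 0 := by simp only [multiplexer_eq_true_iff]

end Multiplexer

section OneHot

variable {τ κ : Type}

/-- One-hot encoding of a word over `κ` with blank letters allowed: block `j` of the encoding marks
the letter `w j`, and a blank letter is an all-zero block. -/
noncomputable def oneHot (w : τ → Option κ) (p : τ × κ) : Bool :=
  decide (w p.1 = some p.2)

theorem oneHot_injective : Function.Injective (oneHot : (τ → Option κ) → τ × κ → Bool) := by
  intro v w h
  funext j
  refine Option.ext fun i => ?_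
  simpa [oneHot] using congrFun h (j, i)

theorem notMem_range_oneHot_iff {x : τ × κ → Bool} :
    x ∉ Set.range oneHot ↔
      ∃ q : {q : τ × κ × κ // q.2.1 ≠ q.2.2},
        (x (q.1.1, q.1.2.1) && x (q.1.1, q.1.2.2)) = true := by
  constructor
  · contrapose!
    intro hx
    have unique {j i i'} (hi : x (j, i) = true) (hi' : x (j, i') = true) : i = i' := by
      by_contra hne
      exact hx ⟨(j, i, i'), hne⟩ (by simp [hi, hi'])
    have letter (j : τ) : ∃ o : Option κ, ∀ i, o = some i ↔ x (j, i) = true := by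
      by_cases hj : ∃ i, x (j, i) = true
      · obtain ⟨i, hi⟩ := hj
        exact ⟨some i, fun i' => ⟨by rintro ⟨⟩; exact hi, fun hi' => congrArg some (unique hi hi')⟩⟩
      · exact ⟨none, fun i => by simpa using fun hi => hj ⟨i, hi⟩⟩
    choose v hv using letter
    exact ⟨v, funext fun p => by simp [oneHot, hv]⟩
  · rintro ⟨⟨⟨j, i, i'⟩, hne⟩, hmarked⟩ ⟨v, rfl⟩
    simp only [oneHot, Bool.and_eq_true, decide_eq_true_eq] at hmarked
    exact hne (Option.some.inj (hmarked.1.symm.trans hmarked.2))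

theorem hasProbPoly_notMem_range_oneHot [Fintype τ] [Fintype κ] {M d : ℕ} {ε : ℝ}
    (hM : Fintype.card τ * Fintype.card κ * Fintype.card κ ≤ M) (hOR : HasProbPoly (ORf M) ε d) :
    HasProbPoly (fun x : τ × κ → Bool => decide (x ∉ Set.range oneHot)) ε (2 * d) := by
  refine hOR.of_exists (ρ := {q : τ × κ × κ // q.2.1 ≠ q.2.2})
    (Q := fun q => X (q.1.1, q.1.2.1) * X (q.1.1, q.1.2.2))
    ((Fintype.card_subtype_le _).trans (by simpa [mul_assoc] using hM))
    (fun q => ?_) (fun q x => ?_) fun x => decide_eq_true_iff.trans notMem_range_oneHot_iff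
  · exact (totalDegree_mul _ _).trans (by simp [totalDegree_X])
  · simp [evalBool, ← ite_and, and_comm]

/-- Polynomial testing whether block `j` of a one-hot encoded word is the letter `o`. -/
noncomputable def letterPoly [Fintype κ] (j : τ) : Option κ → MvPolynomial (τ × κ) ℝ
  | none => 1 - ∑ i, X (j, i)
  | some i => X (j, i)

theorem totalDegree_letterPoly_le [Fintype κ] (j : τ) (o : Option κ) :
    (letterPoly j o).totalDegree ≤ 1 := by
  cases o with
  | none =>
    refine (totalDegree_sub _ _).trans (max_le (by simp) ?_)
    exact totalDegree_finsetSum_le fun i _ => (totalDegree_X _).le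
  | some i => exact (totalDegree_X _).le

theorem evalBool_oneHot_letterPoly [Fintype κ] (v : τ → Option κ) (j : τ) (o : Option κ) :
    evalBool (oneHot v) (letterPoly j o) = if v j = o then 1 else 0 := by
  cases o with
  | none => cases hv : v j <;> simp [letterPoly, evalBool, oneHot, hv]
  | some i => simp [letterPoly, evalBool, oneHot]

theorem evalBool_oneHot_prod_letterPoly [Fintype τ] [Fintype κ] (v w : τ → Option κ) :
    evalBool (oneHot v) (∏ j, letterPoly j (w j)) = if v = w then 1 else 0 :=
  calc evalBool (oneHot v) (∏ j, letterPoly j (w j))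
    _ = ∏ j, evalBool (oneHot v) (letterPoly j (w j)) := map_prod _ _ _
    _ = if v = w then 1 else 0 := by
        simp only [evalBool_oneHot_letterPoly, Finset.prod_ite_zero, Finset.prod_const_one,
          Finset.mem_univ, true_imp_iff, funext_iff]

theorem hasProbPoly_multiplexer_oneHot {μ : Type} [Finite μ] [Fintype τ] [Fintype κ] {M d : ℕ}
    {ε : ℝ} {word : μ → τ → Option κ} (hword : Function.Injective word)
    (hM : Fintype.card τ * Fintype.card κ * Fintype.card κ ≤ M) (hOR : HasProbPoly (ORf M) ε d) :
    HasProbPoly (multiplexer fun m => oneHot (word m)) ε (2 * d + (1 + Fintype.card τ)) := by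
  refine hasProbPoly_multiplexer (hasProbPoly_notMem_range_oneHot hM hOR)
    (q := fun m => ∏ j, letterPoly j (word m j)) (oneHot_injective.comp hword)
    (fun m => by simp) (fun m => ?_) ?_
  · calc (∏ j, letterPoly j (word m j)).totalDegree
      _ ≤ ∑ j, (letterPoly j (word m j)).totalDegree := totalDegree_finsetProd _ _
      _ ≤ ∑ _j : τ, 1 := Finset.sum_le_sum fun j _ => totalDegree_letterPoly_le j (word m j)
      _ = Fintype.card τ := by simp
  · intro m x hx
    obtain ⟨v, rfl⟩ : x ∈ Set.range oneHot := by simpa using hx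
    simp only [evalBool_oneHot_prod_letterPoly, oneHot_injective.eq_iff]

theorem exists_trulyVariate_pdeg_le {ε : ℝ} (hε : 0 ≤ ε) {n t s M : ℕ} (hlower : t * s < n)
    (hupper : n ≤ (s + 1) ^ t) (hM : t * s * s ≤ M) :
    ∃ f : (Fin n → Bool) → Bool, TrulyVariate f ∧ pdeg ε f ≤ 2 * pdeg ε (ORf M) + (1 + t) := by
  obtain ⟨m, rfl⟩ : ∃ m, n = (m + 1) + t * s := ⟨n - t * s - 1, by lia⟩
  obtain ⟨word⟩ : Nonempty (Fin (m + 1) ↪ (Fin t → Option (Fin s))) :=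
    Function.Embedding.nonempty_of_card_le (by simp; lia)
  let e : Fin (m + 1) ⊕ Fin t × Fin s ≃ Fin (m + 1 + t * s) := Fintype.equivOfCardEq (by simp)
  have hdeg := hasProbPoly_multiplexer_oneHot word.injective (by simpa using hM)
    (hasProbPoly_pdeg hε (ORf M))
  exact ⟨_, (trulyVariate_multiplexer _).precomp_equiv e,
    by simpa using (hdeg.precomp e).pdeg_le⟩

end OneHot

section Asymptotics

open Filter Asymptotics

theorem isLittleO_rpow_rpow_atTop {a b : ℝ} (hab : a < b) :
    (fun x : ℝ => x ^ a) =o[atTop] fun x => x ^ b := by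
  refine .of_tendsto_div_atTop ?_
  refine (tendsto_rpow_atTop (sub_pos.2 hab)).congr' ?_
  filter_upwards [eventually_gt_atTop 0] with x hx using Real.rpow_sub hx b a

theorem isBigO_natCeil_atTop : (fun x : ℝ => (⌈x⌉₊ : ℝ)) =O[atTop] fun x => x :=
  isEquivalent_nat_ceil.isBigO

theorem eventually_natCeil_rpow_le_two_pow_natCeil (a : ℝ) :
    ∀ᶠ x : ℝ in atTop, ⌈x ^ a⌉₊ ≤ 2 ^ ⌈x⌉₊ := by
  have hexp := (isLittleO_rpow_exp_pos_mul_atTop a (Real.log_pos one_lt_two)).eventuallyLE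
  filter_upwards [hexp] with x hx
  refine Nat.ceil_le.2 ?_
  calc x ^ a ≤ ‖Real.exp (Real.log 2 * x)‖ := (le_abs_self _).trans hx
    _ = 2 ^ x := by rw [Real.norm_of_nonneg (Real.exp_nonneg _), Real.rpow_def_of_pos two_pos]
    _ ≤ 2 ^ (⌈x⌉₊ : ℝ) := Real.rpow_le_rpow_of_exponent_le one_le_two (Nat.le_ceil x)
    _ = ((2 ^ ⌈x⌉₊ : ℕ) : ℝ) := by push_cast; exact Real.rpow_natCast _ _

theorem eventually_mul_natCeil_lt_rpow (A : ℝ) {a : ℝ} (ha : 1 < a) :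
    ∀ᶠ x : ℝ in atTop, A * ⌈x⌉₊ < x ^ a := by
  have hceil : (fun x : ℝ => A * ⌈x⌉₊) =o[atTop] fun x => x ^ a :=
    (isBigO_natCeil_atTop.const_mul_left A).trans_isLittleO
      (by simpa using isLittleO_rpow_rpow_atTop ha)
  filter_upwards [hceil.bound one_half_pos, eventually_gt_atTop 0] with x hx hx0
  have hpos : 0 < x ^ a := Real.rpow_pos_of_pos hx0 a
  rw [Real.norm_of_nonneg hpos.le] at hx
  linarith [Real.le_norm_self (A * ⌈x⌉₊)]

theorem eventually_mul_natCeil_rpow_add_natCeil_rpow_le_rpow (A B : ℝ) {a b c : ℝ} (ha : 0 ≤ a)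
    (hab : a < b) (hc : 0 < c) (hcb : c < b) :
    ∀ᶠ x : ℝ in atTop, A * (B * ⌈x⌉₊) ^ a + (1 + ⌈x ^ c⌉₊) ≤ x ^ b := by
  have hpow : (fun x : ℝ => A * (B * ⌈x⌉₊) ^ a) =o[atTop] fun x => x ^ b :=
    (((isBigO_natCeil_atTop.const_mul_left B).rpow ha (eventually_ge_atTop 0)).const_mul_left
      A).trans_isLittleO (isLittleO_rpow_rpow_atTop hab)
  have hone : (fun _ : ℝ => (1 : ℝ)) =o[atTop] fun x => x ^ b := by
    simpa using isLittleO_rpow_rpow_atTop (hc.trans hcb)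
  have hceil : (fun x : ℝ => (⌈x ^ c⌉₊ : ℝ)) =o[atTop] fun x => x ^ b :=
    (isBigO_natCeil_atTop.comp_tendsto (tendsto_rpow_atTop hc)).trans_isLittleO
      (isLittleO_rpow_rpow_atTop hcb)
  filter_upwards [(hpow.add (hone.add hceil)).eventuallyLE, eventually_ge_atTop 0] with x hx hx0
  exact (Real.le_norm_self _).trans (hx.trans_eq (Real.norm_of_nonneg (by positivity)))

-- With `log₂ n = x ^ (c + 1)`, take `u = ⌈x⌉` and `t = ⌈x ^ c⌉`.
theorem eventually_exists_block_parameters {c ε : ℝ} (hc : 0 < c) (hε : 0 < ε) (N : ℕ) :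
    ∀ᶠ n : ℕ in atTop, ∃ u t : ℕ, N ≤ u ∧ t ≤ 2 ^ u ∧ 2 ^ (2 * u) < n ∧ n ≤ 2 ^ (u * t) ∧
      2 * (3 * u : ℝ) ^ (c + ε) + (1 + t) ≤ Real.logb 2 n ^ (c / (c + 1) + ε) := by
  have hlog : Tendsto (fun n : ℕ => Real.logb 2 n) atTop atTop :=
    (Real.tendsto_logb_atTop one_lt_two).comp tendsto_natCast_atTop_atTop
  have hroot : Tendsto (fun n : ℕ => Real.logb 2 n ^ (c + 1)⁻¹) atTop atTop :=
    (tendsto_rpow_atTop (by positivity)).comp hlog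
  have hcε : 0 < c * ε := mul_pos hc hε
  filter_upwards [hroot.eventually (eventually_natCeil_rpow_le_two_pow_natCeil c),
    hroot.eventually (eventually_mul_natCeil_lt_rpow 2 (lt_add_of_pos_left 1 hc)),
    hroot.eventually (eventually_mul_natCeil_rpow_add_natCeil_rpow_le_rpow 2 3
      (a := c + ε) (b := c + (c + 1) * ε) (by positivity) (by linarith) hc (by linarith)),
    hroot.eventually (eventually_ge_atTop (N : ℝ)), hroot.eventually (eventually_gt_atTop 0),
    hlog.eventually (eventually_ge_atTop 0), eventually_gt_atTop 0]
    with n ht htwo hdeg hN hx0 hlog0 hn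
  set x := Real.logb 2 n ^ (c + 1)⁻¹
  have hx : x ^ (c + 1) = Real.logb 2 n := Real.rpow_inv_rpow hlog0 (by positivity)
  have hn' : (0 : ℝ) < n := Nat.cast_pos.2 hn
  refine ⟨⌈x⌉₊, ⌈x ^ c⌉₊, ?_, ht, ?_, ?_, ?_⟩
  · exact_mod_cast hN.trans (Nat.le_ceil x)
  · have hlower : ((2 * ⌈x⌉₊ : ℕ) : ℝ) < Real.logb 2 n := by rw [← hx]; exact_mod_cast htwo
    exact_mod_cast (Real.lt_logb_iff_rpow_lt one_lt_two hn').1 hlower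
  · have hupper : Real.logb 2 n ≤ ((⌈x⌉₊ * ⌈x ^ c⌉₊ : ℕ) : ℝ) :=
      calc Real.logb 2 n = x * x ^ c := by rw [← hx, Real.rpow_add_one hx0.ne', mul_comm]
        _ ≤ ⌈x⌉₊ * ⌈x ^ c⌉₊ := by gcongr <;> exact Nat.le_ceil _
        _ = ((⌈x⌉₊ * ⌈x ^ c⌉₊ : ℕ) : ℝ) := by push_cast; rfl
    exact_mod_cast (Real.logb_le_iff_le_rpow one_lt_two hn').1 hupper
  · have hexponent : c + (c + 1) * ε = (c + 1) * (c / (c + 1) + ε) := by field_simp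
    rwa [hexponent, Real.rpow_mul hx0.le, hx] at hdeg

end Asymptotics

theorem exists_trulyVariate_pdeg_le_pdeg_two_pow {ε : ℝ} (hε : 0 ≤ ε) {n u t : ℕ}
    (ht : t ≤ 2 ^ u) (hlower : 2 ^ (2 * u) < n) (hupper : n ≤ 2 ^ (u * t)) :
    ∃ f : (Fin n → Bool) → Bool,
      TrulyVariate f ∧ pdeg ε f ≤ 2 * pdeg ε (ORf (2 ^ (3 * u))) + (1 + t) := by
  apply exists_trulyVariate_pdeg_le hε (s := 2 ^ u)
  · calc t * 2 ^ u ≤ 2 ^ u * 2 ^ u := by gcongr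
      _ = 2 ^ (2 * u) := by ring
      _ < n := hlower
  · calc n ≤ (2 ^ u) ^ t := by rwa [← pow_mul]
      _ ≤ (2 ^ u + 1) ^ t := by gcongr; lia
  · calc t * 2 ^ u * 2 ^ u ≤ 2 ^ u * 2 ^ u * 2 ^ u := by gcongr
      _ = 2 ^ (3 * u) := by ring

theorem upper_bound_truly_nvariate_general {δ : ℝ} (hδ : 0 ≤ δ) {c : ℝ} (hc : 0 < c)
    (hOR : ∀ ε : ℝ, 0 < ε → ∃ N : ℕ, ∀ n : ℕ, N ≤ n →
      (pdeg δ (ORf n) : ℝ) ≤ (Real.logb 2 n) ^ (c + ε)) :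
    ∀ ε : ℝ, 0 < ε → ∃ N' : ℕ, ∀ n : ℕ, N' ≤ n →
      ∃ f : (Fin n → Bool) → Bool, TrulyVariate f ∧
        (pdeg δ f : ℝ) ≤ (Real.logb 2 n) ^ (c / (c + 1) + ε) := by
  intro ε hε
  obtain ⟨N, hN⟩ := hOR ε hε
  refine Filter.eventually_atTop.1 ?_
  filter_upwards [eventually_exists_block_parameters hc hε N] with n hn
  obtain ⟨u, t, hNu, ht, hlower, hupper, hbound⟩ := hn
  obtain ⟨f, hf, hdeg⟩ := exists_trulyVariate_pdeg_le_pdeg_two_pow hδ ht hlower hupper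
  have hN_le : N ≤ 2 ^ (3 * u) :=
    hNu.trans (Nat.lt_two_pow_self.le.trans (Nat.pow_le_pow_right two_pos (by lia)))
  have hlog : Real.logb 2 ((2 ^ (3 * u) : ℕ) : ℝ) = 3 * u := by simp [Real.logb_pow]
  refine ⟨f, hf, ?_⟩
  calc (pdeg δ f : ℝ)
    _ ≤ 2 * pdeg δ (ORf (2 ^ (3 * u))) + (1 + t) := by exact_mod_cast hdeg
    _ ≤ 2 * (3 * u : ℝ) ^ (c + ε) + (1 + t) := by
        gcongr
        exact (hN _ hN_le).trans_eq (by rw [hlog])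
    _ ≤ Real.logb 2 n ^ (c / (c + 1) + ε) := hbound

theorem upper_bound_truly_nvariate (c : ℝ) (hc : 0 < c)
    (hOR : ∀ ε : ℝ, 0 < ε → ∃ N : ℕ, ∀ n : ℕ, N ≤ n →
      (pdeg (1/3) (ORf n) : ℝ) ≤ (Real.logb 2 n) ^ (c + ε)) :
    ∀ ε : ℝ, 0 < ε → ∃ N' : ℕ, ∀ n : ℕ, N' ≤ n →
      ∃ f : (Fin n → Bool) → Bool, TrulyVariate f ∧
        (pdeg (1/3) f : ℝ) ≤ (Real.logb 2 n) ^ (c / (c + 1) + ε) :=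
  upper_bound_truly_nvariate_general (by norm_num) hc hOR
end
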